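/- arXiv:math/0703452 — 9 statements merged into one kernel-verified Lean document; each statement's English description precedes it below -/
import Mathlib

section
/- For every compact set K ⊆ ℂ, the sequence of functions z ↦ (−1)^{k+1}·(2π)^{2k}/(2·(2k)!)·B_{2k}(z) converges uniformly on K to z ↦ cos(2πz) as k → ∞, where B_{2k} is the Bernoulli polynomial of even degree 2k evaluated over ℂ. -/
open Filter Real

/-- The `n`-th Bernoulli polynomial evaluated at a complex argument. -/
noncomputable def BernoulliC (n : ℕ) (z : ℂ) : ℂ :=
  Polynomial.aeval z (Polynomial.bernoulli n)

lemma aux_zeta_tendsto :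
    Tendsto (fun j : ℕ => ∑' n : ℕ, (1 : ℝ) / (n : ℝ) ^ (2 * j)) atTop (nhds 1) := by
  have h1 : (1 : ℝ) = ∑' n : ℕ, (if n = 1 then (1:ℝ) else 0) := by simp
  suffices h : Tendsto (fun j : ℕ => ∑' n : ℕ, (1 : ℝ) / (n : ℝ) ^ (2 * j)) atTop
      (nhds (∑' n : ℕ, (if n = 1 then (1:ℝ) else 0))) by rwa [← h1] at h
  apply tendsto_tsum_of_dominated_convergence (bound := fun n : ℕ => (1 : ℝ) / (n : ℝ) ^ 2)
  · exact Real.summable_one_div_nat_pow.mpr (by norm_num)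
  · intro n
    rcases Nat.lt_or_ge 1 n with hn | hn
    · have hne : n ≠ 1 := by omega
      simp only [hne, if_false]
      have h : Tendsto (fun j : ℕ => (1 / (n : ℝ) ^ 2) ^ j) atTop (nhds 0) := by
        apply tendsto_pow_atTop_nhds_zero_of_lt_one (by positivity)
        have : (1 : ℝ) < n := by exact_mod_cast hn
        rw [div_lt_one (by positivity)]
        nlinarith
      refine h.congr fun j => ?_
      rw [div_pow, one_pow, pow_mul]
    · interval_cases n
      · simp only [zero_ne_one, if_false]
        refine tendsto_const_nhds.congr' ?_
        filter_upwards [eventually_ge_atTop 1] with j hj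
        have : 2 * j ≠ 0 := by omega
        simp [this]
      · simp
  · filter_upwards [eventually_ge_atTop 1] with j hj
    intro n
    rcases Nat.eq_zero_or_pos n with rfl | hn
    · have : 2 * j ≠ 0 := by omega
      simp [this]
    · have : (1 : ℝ) ≤ n := by exact_mod_cast hn
      rw [Real.norm_of_nonneg (by positivity)]
      apply one_div_le_one_div_of_le (by positivity)
      exact pow_le_pow_right₀ this (by omega)

/-- normalized Bernoulli numbers -/
noncomputable def auxA (j : ℕ) : ℝ := (2 * π) ^ j * (bernoulli j : ℝ) / (j.factorial : ℝ)

lemma auxA_even_tendsto :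
    Tendsto (fun j : ℕ => (-1 : ℝ) ^ (j + 1) / 2 * auxA (2 * j)) atTop (nhds 1) := by
  refine aux_zeta_tendsto.congr' ?_
  filter_upwards [eventually_ge_atTop 1] with j hj
  rw [(hasSum_zeta_nat (by omega : j ≠ 0)).tsum_eq, auxA]
  obtain ⟨i, rfl⟩ : ∃ i, j = i + 1 := ⟨j - 1, by omega⟩
  have : 2 * (i + 1) - 1 = 2 * i + 1 := by omega
  rw [this, mul_pow]
  ring

lemma auxA_odd {j : ℕ} (h : Odd j) (hj : 1 < j) : auxA j = 0 := by
  simp [auxA, bernoulli_eq_zero_of_odd h hj]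

lemma auxA_bdd : ∃ C : ℝ, ∀ j, |auxA j| ≤ C := by
  obtain ⟨C, hC⟩ := (Metric.isBounded_range_of_tendsto _ auxA_even_tendsto).exists_norm_le
  refine ⟨max (2 * C) |auxA 1|, fun j => ?_⟩
  rcases Nat.even_or_odd' j with ⟨i, rfl | rfl⟩
  · have := hC _ ⟨i, rfl⟩
    simp only [norm_mul, norm_div, norm_pow, norm_neg, norm_one, one_pow, Real.norm_eq_abs] at this
    norm_num at this
    exact le_max_of_le_left (by linarith)
  · rcases Nat.eq_zero_or_pos i with rfl | hi
    · exact le_max_right _ _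
    · rw [auxA_odd ⟨i, rfl⟩ (by omega), abs_zero]
      exact le_max_of_le_right (abs_nonneg _)

/-- coefficients of the rescaled polynomials -/
noncomputable def auxC (k m : ℕ) : ℂ :=
  if m ≤ 2 * k then (-1 : ℂ) ^ (k + 1) / 2 * (auxA (2 * k - m) : ℂ) else 0

/-- coefficients of cosine -/
noncomputable def auxD (m : ℕ) : ℂ := (Complex.I ^ m + (-Complex.I) ^ m) / 2

lemma auxC_tendsto (m : ℕ) : Tendsto (fun k => auxC k m) atTop (nhds (auxD m)) := by
  rcases Nat.even_or_odd' m with ⟨p, rfl | rfl⟩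
  · have hD : auxD (2 * p) = (-1) ^ p * ((1 : ℝ) : ℂ) := by
      simp [auxD, pow_mul]
    rw [hD]
    have h := ((Complex.continuous_ofReal.tendsto _).comp
      (auxA_even_tendsto.comp (tendsto_sub_atTop_nat p))).const_mul ((-1 : ℂ) ^ p)
    refine h.congr' ?_
    filter_upwards [eventually_ge_atTop p] with k hk
    obtain ⟨q, rfl⟩ := Nat.exists_eq_add_of_le hk
    have h1 : 2 * p ≤ 2 * (p + q) := by omega
    have h2 : 2 * (p + q) - 2 * p = 2 * q := by omega
    simp only [auxC, h1, if_true, h2, Function.comp, Nat.add_sub_cancel_left]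
    push_cast
    ring
  · have hD : auxD (2 * p + 1) = 0 := by
      simp [auxD, pow_succ, pow_mul]
    rw [hD]
    refine tendsto_const_nhds.congr' ?_
    filter_upwards [eventually_ge_atTop (p + 2)] with k hk
    have h1 : 2 * p + 1 ≤ 2 * k := by omega
    rw [auxC, if_pos h1, auxA_odd ⟨k - p - 1, by omega⟩ (by omega)]
    simp

lemma auxD_hasSum (w : ℂ) :
    HasSum (fun m : ℕ => auxD m * (w ^ m / (m.factorial : ℂ))) (Complex.cos w) := by
  have h1 := NormedSpace.expSeries_div_hasSum_exp (𝔸 := ℂ) (w * Complex.I)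
  have h2 := NormedSpace.expSeries_div_hasSum_exp (𝔸 := ℂ) (-w * Complex.I)
  rw [← Complex.exp_eq_exp_ℂ] at h1 h2
  have h := (h1.add h2).div_const 2
  refine h.congr_fun ?_ 
  intro m
  simp only [auxD]
  rw [mul_pow, neg_mul_comm, mul_pow]
  ring

lemma auxC_hasSum (k : ℕ) (z : ℂ) :
    HasSum (fun m : ℕ => auxC k m * ((2 * (π : ℂ) * z) ^ m / (m.factorial : ℂ)))
      ((-1 : ℂ) ^ (k + 1) * (2 * (π : ℂ)) ^ (2 * k) / (2 * ((2 * k).factorial : ℂ)) *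
          BernoulliC (2 * k) z) := by
  have h : ((-1 : ℂ) ^ (k + 1) * (2 * (π : ℂ)) ^ (2 * k) / (2 * ((2 * k).factorial : ℂ)) *
          BernoulliC (2 * k) z) = ∑ m ∈ Finset.range (2 * k + 1),
          auxC k m * ((2 * (π : ℂ) * z) ^ m / (m.factorial : ℂ)) := by
    rw [BernoulliC, Polynomial.bernoulli_def, map_sum, Finset.mul_sum]
    refine Finset.sum_congr rfl fun m hm => ?_
    have hm' : m ≤ 2 * k := by simpa [Nat.lt_succ_iff] using hm
    rw [Polynomial.aeval_monomial, auxC, if_pos hm', auxA]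
    obtain ⟨q, hq⟩ := Nat.exists_eq_add_of_le hm'
    have hq' : 2 * k - m = q := by omega
    rw [hq', hq]
    have hch : (((m + q).choose m : ℕ) : ℂ) * m.factorial * q.factorial = (m + q).factorial := by
      rw [Nat.choose_symm_add]
      exact_mod_cast Nat.add_choose_mul_factorial_mul_factorial m q
    have h1 : (m.factorial : ℂ) ≠ 0 := by exact_mod_cast m.factorial_ne_zero
    have h2 : (q.factorial : ℂ) ≠ 0 := by exact_mod_cast q.factorial_ne_zero
    have h3 : (((m + q).choose m : ℕ) : ℂ) ≠ 0 := by
      exact_mod_cast (Nat.choose_pos (Nat.le_add_right m q)).ne'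
    rw [← hch]
    simp only [map_mul, eq_ratCast, map_natCast]
    push_cast
    field_simp
    ring
  rw [h]
  apply hasSum_sum_of_ne_finset_zero
  intro m hm
  have : ¬ m ≤ 2 * k := by simpa [Nat.lt_succ_iff] using hm
  simp [auxC, this]

/-- On every compact subset of `ℂ`, the rescaled even-degree Bernoulli polynomials
`(-1)^{k+1} (2π)^{2k} / (2 (2k)!) · B_{2k}(z)` converge uniformly to `cos (2πz)`. -/
theorem bernoulli_even_tendstoUniformlyOn_cos (K : Set ℂ) (hK : IsCompact K) :
    TendstoUniformlyOn
      (fun (k : ℕ) (z : ℂ) =>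
        (-1 : ℂ) ^ (k + 1) * (2 * (π : ℂ)) ^ (2 * k) / (2 * ((2 * k).factorial : ℂ)) *
          BernoulliC (2 * k) z)
      (fun z => Complex.cos (2 * (π : ℂ) * z)) atTop K := by
  obtain ⟨R, hR⟩ := hK.isBounded.exists_norm_le
  obtain ⟨C, hC⟩ := auxA_bdd
  have hC0 : 0 ≤ C := (abs_nonneg _).trans (hC 0)
  have hCb : ∀ k m, ‖auxC k m‖ ≤ C := by
    intro k m
    rw [auxC]
    split_ifs
    · have := hC (2 * k - m)
      simp only [norm_mul, norm_div, norm_pow, norm_neg, norm_one, one_pow, Complex.norm_real,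
        Real.norm_eq_abs]
      norm_num
      have := abs_nonneg (auxA (2 * k - m))
      linarith
    · simpa using hC0
  have hDb : ∀ m, ‖auxD m‖ ≤ C := fun m =>
    le_of_tendsto (auxC_tendsto m).norm (Eventually.of_forall fun k => hCb k m)
  set r : ℝ := 2 * π * max R 0 with hr
  have hr0 : 0 ≤ r := by positivity
  have hsum : Summable (fun m : ℕ => 2 * C * (r ^ m / (m.factorial : ℝ))) :=
    (Real.summable_pow_div_factorial r).mul_left _
  have hbd : ∀ k m, ‖auxC k m - auxD m‖ * (r ^ m / (m.factorial : ℝ)) ≤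
      2 * C * (r ^ m / (m.factorial : ℝ)) := by
    intro k m
    apply mul_le_mul_of_nonneg_right _ (by positivity)
    have := norm_sub_le (auxC k m) (auxD m)
    linarith [hCb k m, hDb m]
  have hlim : Tendsto (fun k => ∑' m : ℕ, ‖auxC k m - auxD m‖ * (r ^ m / (m.factorial : ℝ)))
      atTop (nhds 0) := by
    have h0 : (0 : ℝ) = ∑' m : ℕ, (0 : ℝ) := by simp
    rw [h0]
    apply tendsto_tsum_of_dominated_convergence hsum
    · intro m
      have := ((auxC_tendsto m).sub_const (auxD m)).norm.mul_const (r ^ m / (m.factorial : ℝ))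
      simpa using this
    · refine Eventually.of_forall fun k m => ?_
      rw [Real.norm_of_nonneg (by positivity)]
      exact hbd k m
  rw [Metric.tendstoUniformlyOn_iff]
  intro ε hε
  filter_upwards [hlim.eventually (gt_mem_nhds hε)] with k hk z hz
  refine lt_of_le_of_lt ?_ hk
  rw [dist_comm, dist_eq_norm, ← ((auxC_hasSum k z).sub (auxD_hasSum (2 * π * z))).tsum_eq]
  apply tsum_of_norm_bounded (Summable.hasSum _)
  · intro m
    rw [← sub_mul, norm_mul]
    apply mul_le_mul_of_nonneg_left _ (norm_nonneg _)
    rw [norm_div, norm_pow, Complex.norm_natCast]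
    gcongr
    rw [norm_mul, norm_mul, Complex.norm_real, Complex.norm_ofNat, Real.norm_of_nonneg pi_pos.le, hr]
    gcongr
    exact (hR z hz).trans (le_max_left _ _)
  · exact Summable.of_nonneg_of_le (fun m => by positivity) (hbd k) hsum
end

section
/- For every compact set K ⊆ ℂ, the sequence of functions z ↦ (−1)^{k+1}·(2π)^{2k+1}/(2·(2k+1)!)·B_{2k+1}(z) converges uniformly on K to z ↦ sin(2πz) as k → ∞, where B_{2k+1} is the Bernoulli polynomial of odd degree 2k+1 evaluated over ℂ. -/
open Filter Real

/-- normalised Bernoulli number -/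
noncomputable def bcAux (m : ℕ) : ℝ := (2 * π) ^ m * (bernoulli m : ℝ) / (2 * (m.factorial : ℝ))

noncomputable def zAux (n : ℕ) : ℝ := ∑' m : ℕ, 1 / (m : ℝ) ^ (2 * n)

noncomputable def eAux (i : ℕ) : ℝ := if Even i then 0 else (-1) ^ (i / 2)

noncomputable def dAux (k i : ℕ) : ℝ :=
  if i ≤ 2 * k + 1 then (-1) ^ (k + 1) * bcAux (2 * k + 1 - i) else 0

lemma bcAux_even (n : ℕ) (hn : n ≠ 0) : bcAux (2 * n) = (-1) ^ (n + 1) * zAux n := by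
  have h := (hasSum_zeta_nat hn).tsum_eq
  unfold zAux bcAux
  rw [h]
  obtain ⟨j, rfl⟩ := Nat.exists_eq_succ_of_ne_zero hn
  have h1 : 2 * (j + 1) - 1 = 2 * j + 1 := by omega
  have h3 : ((-1 : ℝ) ^ (j + 1 + 1)) * (-1) ^ (j + 1 + 1) = 1 := by
    rw [← mul_pow]; simp
  simp only [Nat.succ_eq_add_one, h1]
  have hf : ((2 * (j + 1)).factorial : ℝ) ≠ 0 := by positivity
  field_simp
  rw [sq, h3]
  ring

lemma bcAux_odd (m : ℕ) (hm : Odd m) (h1 : 1 < m) : bcAux m = 0 := by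
  have : bernoulli m = 0 := by
    rw [bernoulli_eq_bernoulli'_of_ne_one (by omega)]
    exact bernoulli'_eq_zero_of_odd hm h1
  simp [bcAux, this]

lemma term_le (n : ℕ) (hn : n ≠ 0) (m : ℕ) : 1 / (m : ℝ) ^ (2 * n) ≤ 1 / (m : ℝ) ^ (2 * 1) := by
  rcases Nat.eq_zero_or_pos m with rfl | hm
  · simp [hn]
  · have : (1 : ℝ) ≤ m := by exact_mod_cast hm
    apply one_div_le_one_div_of_le (by positivity)
    exact pow_le_pow_right₀ this (by omega)

lemma zAux_nonneg (n : ℕ) : 0 ≤ zAux n := tsum_nonneg fun m => by positivity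

lemma zAux_le (n : ℕ) (hn : n ≠ 0) : zAux n ≤ 2 := by
  have h := (hasSum_zeta_nat hn).summable.tsum_le_tsum (term_le n hn)
    (hasSum_zeta_nat one_ne_zero).summable
  have h2 := hasSum_zeta_two.tsum_eq
  simp only [mul_one] at h
  rw [h2] at h
  have := Real.pi_lt_d2
  have := Real.pi_pos
  unfold zAux
  nlinarith

lemma zAux_tendsto : Tendsto zAux atTop (nhds 1) := by
  have h : Tendsto zAux atTop (nhds (∑' m : ℕ, if m = 1 then (1 : ℝ) else 0)) := by
    apply tendsto_tsum_of_dominated_convergence (bound := fun m : ℕ => 1 / (m : ℝ) ^ (2 * 1))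
    · exact (hasSum_zeta_nat one_ne_zero).summable
    · intro m
      rcases lt_trichotomy m 1 with h | h | h
      · obtain rfl : m = 0 := by omega
        refine Tendsto.congr' ?_ tendsto_const_nhds
        filter_upwards [eventually_ne_atTop 0] with n hn
        simp [hn]
      · simp [h]
      · rw [if_neg (by omega)]
        have h2 : (1 : ℝ) < m := by exact_mod_cast h
        have h3 : Tendsto (fun n : ℕ => ((1 / (m : ℝ)) ^ 2) ^ n) atTop (nhds 0) := by
          apply tendsto_pow_atTop_nhds_zero_of_lt_one (by positivity)
          rw [div_pow, one_pow, div_lt_one (by positivity)]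
          nlinarith
        refine h3.congr fun n => ?_
        rw [← pow_mul, div_pow, one_pow]
    · filter_upwards [eventually_ne_atTop 0] with n hn m
      rw [Real.norm_of_nonneg (by positivity)]
      exact term_le n hn m
  simpa using h

lemma bcAux_bound (m : ℕ) : |bcAux m| ≤ 2 := by
  rcases Nat.even_or_odd' m with ⟨n, rfl | rfl⟩
  · by_cases hn : n = 0
    · subst hn; simp [bcAux]; norm_num
    · rw [bcAux_even n hn, abs_mul, abs_pow, abs_neg, abs_one, one_pow, one_mul,
        abs_of_nonneg (zAux_nonneg n)]
      exact zAux_le n hn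
  · by_cases hn : n = 0
    · subst hn
      have := Real.pi_lt_d2
      have := Real.pi_pos
      simp [bcAux]
      rw [abs_le]
      constructor <;> linarith
    · rw [bcAux_odd _ ⟨n, rfl⟩ (by omega)]; simp

lemma dAux_bound (k i : ℕ) : |dAux k i| ≤ 2 := by
  unfold dAux
  split_ifs
  · rw [abs_mul, abs_pow, abs_neg, abs_one, one_pow, one_mul]
    exact bcAux_bound _
  · simp

lemma eAux_bound (i : ℕ) : |eAux i| ≤ 1 := by
  unfold eAux
  split_ifs <;> simp

lemma dAux_tendsto (i : ℕ) : Tendsto (fun k => dAux k i) atTop (nhds (eAux i)) := by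
  rcases Nat.even_or_odd' i with ⟨j, rfl | rfl⟩
  · have he : eAux (2 * j) = 0 := by simp [eAux]
    rw [he]
    refine Tendsto.congr' ?_ tendsto_const_nhds
    filter_upwards [eventually_gt_atTop j] with k hk
    rw [dAux, if_pos (by omega), bcAux_odd _ ⟨k - j, by omega⟩ (by omega), mul_zero]
  · have he : eAux (2 * j + 1) = (-1) ^ j * 1 := by
      have : (2 * j + 1) / 2 = j := by omega
      simp [eAux, this]
    rw [he]
    have h1 : Tendsto (fun k => (-1 : ℝ) ^ j * zAux (k - j)) atTop (nhds ((-1) ^ j * 1)) :=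
      (zAux_tendsto.comp (tendsto_sub_atTop_nat j)).const_mul _
    refine Tendsto.congr' ?_ h1
    filter_upwards [eventually_gt_atTop j] with k hk
    obtain ⟨l, rfl⟩ := Nat.exists_eq_add_of_lt hk
    have e1 : 2 * (j + l + 1) + 1 - (2 * j + 1) = 2 * (l + 1) := by omega
    have e2 : j + l + 1 - j = l + 1 := by omega
    rw [dAux, if_pos (by omega), e1, e2, bcAux_even _ (by omega), ← mul_assoc, ← pow_add]
    congr 1
    have e3 : j + l + 1 + 1 + (l + 1 + 1) = j + 2 * (l + 2) := by omega
    rw [e3, pow_add, pow_mul]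
    simp

lemma bern_hasSum (k : ℕ) (z : ℂ) :
    HasSum (fun i : ℕ => (dAux k i : ℂ) * ((2 * (π : ℂ) * z) ^ i / (i.factorial : ℂ)))
      ((-1 : ℂ) ^ (k + 1) * (2 * (π : ℂ)) ^ (2 * k + 1) / (2 * ((2 * k + 1).factorial : ℂ)) *
          BernoulliC (2 * k + 1) z) := by
  have h : (-1 : ℂ) ^ (k + 1) * (2 * (π : ℂ)) ^ (2 * k + 1) / (2 * ((2 * k + 1).factorial : ℂ)) *
          BernoulliC (2 * k + 1) z = ∑ i ∈ Finset.range (2 * k + 1 + 1),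
          (dAux k i : ℂ) * ((2 * (π : ℂ) * z) ^ i / (i.factorial : ℂ)) := by
    rw [BernoulliC, Polynomial.bernoulli_def, map_sum, Finset.mul_sum]
    apply Finset.sum_congr rfl
    intro i hi
    have hi' : i ≤ 2 * k + 1 := by simpa [Nat.lt_succ_iff] using hi
    rw [dAux, if_pos hi', bcAux, Polynomial.aeval_monomial]
    obtain ⟨m, hm⟩ := Nat.exists_eq_add_of_le hi'
    rw [hm]
    have hc : ((i + m).choose i : ℂ) = (i + m).factorial / (i.factorial * m.factorial) := by
      rw [Nat.choose_symm_add, Nat.add_choose, Nat.cast_div (Nat.factorial_mul_factorial_dvd_factorial_add i m)]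
      · push_cast; rfl
      · exact_mod_cast (by positivity : (i.factorial * m.factorial : ℕ) ≠ 0)
    have f1 : ((i + m).factorial : ℂ) ≠ 0 := by exact_mod_cast Nat.factorial_ne_zero _
    have f2 : (i.factorial : ℂ) ≠ 0 := by exact_mod_cast Nat.factorial_ne_zero _
    have f3 : (m.factorial : ℂ) ≠ 0 := by exact_mod_cast Nat.factorial_ne_zero _
    simp only [Nat.add_sub_cancel_left, eq_ratCast]
    push_cast
    rw [hc]
    field_simp
    ring
  rw [h]
  apply hasSum_sum_of_ne_finset_zero
  intro i hi
  have : ¬ i ≤ 2 * k + 1 := by simpa [Nat.lt_succ_iff] using hi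
  simp [dAux, this]

lemma sin_hasSum (z : ℂ) :
    HasSum (fun i : ℕ => (eAux i : ℂ) * (z ^ i / (i.factorial : ℂ))) (Complex.sin z) := by
  rw [← zero_add (Complex.sin z)]
  apply HasSum.even_add_odd
  · simp [eAux]
  · convert Complex.hasSum_sin z using 2 with j
    have : (2 * j + 1) / 2 = j := by omega
    simp [eAux, this]
    ring


/-- On every compact subset of `ℂ`, the rescaled odd-degree Bernoulli polynomials
`(-1)^{k+1} (2π)^{2k+1} / (2 (2k+1)!) · B_{2k+1}(z)` converge uniformly to `sin (2πz)`. -/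
theorem bernoulli_odd_tendstoUniformlyOn_sin (K : Set ℂ) (hK : IsCompact K) :
    TendstoUniformlyOn
      (fun (k : ℕ) (z : ℂ) =>
        (-1 : ℂ) ^ (k + 1) * (2 * (π : ℂ)) ^ (2 * k + 1) / (2 * ((2 * k + 1).factorial : ℂ)) *
          BernoulliC (2 * k + 1) z)
      (fun z => Complex.sin (2 * (π : ℂ) * z)) atTop K := by
  obtain ⟨R, hR⟩ := hK.isBounded.exists_norm_le
  have hlim : Tendsto (fun k => ∑' i : ℕ, |dAux k i - eAux i| * ((2 * π * |R|) ^ i / i.factorial))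
      atTop (nhds (∑' _ : ℕ, (0 : ℝ))) := by
    apply tendsto_tsum_of_dominated_convergence
      (bound := fun i : ℕ => 3 * ((2 * π * |R|) ^ i / i.factorial))
    · exact (Real.summable_pow_div_factorial _).mul_left 3
    · intro i
      have h := ((dAux_tendsto i).sub_const (eAux i)).abs.mul_const
        ((2 * π * |R|) ^ i / (i.factorial : ℝ))
      simpa using h
    · refine Eventually.of_forall fun k i => ?_
      rw [Real.norm_of_nonneg (by positivity)]
      gcongr
      have := abs_sub (dAux k i) (eAux i)
      linarith [dAux_bound k i, eAux_bound i]
  rw [tsum_zero] at hlim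
  rw [Metric.tendstoUniformlyOn_iff]
  intro ε hε
  filter_upwards [hlim.eventually_lt_const hε] with k hk z hz
  refine lt_of_le_of_lt ?_ hk
  have hs := (bern_hasSum k z).sub (sin_hasSum (2 * π * z))
  rw [dist_comm, dist_eq_norm, ← hs.tsum_eq]
  have hsum : Summable fun i : ℕ => |dAux k i - eAux i| * ((2 * π * |R|) ^ i / i.factorial) := by
    refine Summable.of_nonneg_of_le (fun i => by positivity) (fun i => ?_)
      ((Real.summable_pow_div_factorial (2 * π * |R|)).mul_left 3)
    gcongr
    have := abs_sub (dAux k i) (eAux i)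
    linarith [dAux_bound k i, eAux_bound i]
  refine tsum_of_norm_bounded hsum.hasSum fun i => ?_
  rw [← sub_mul, norm_mul, ← Complex.ofReal_sub, Complex.norm_real, Real.norm_eq_abs, norm_div,
    norm_pow, norm_mul, norm_mul, Complex.norm_real, Complex.norm_natCast, Real.norm_eq_abs,
    abs_of_pos Real.pi_pos, Complex.norm_ofNat]
  gcongr
  exact (hR z hz).trans (le_abs_self R)
end

section
/- For every n ∈ ℕ and every z ∈ ℂ, |(−1)^{⌊n/2⌋}·(2π)^n/(2·n!)·B_n(z + 1/2) − T_n(2πz)| < 2^{−n}·e^{4π|z|}, where T_n is the degree-n truncation of the cosine series when n is even and of the sine series when n is odd. -/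
open Filter Real Finset

/-- The degree-`n` truncation of the cosine series (for `n` even) or of the sine series
(for `n` odd): `T_{2k}(z) = ∑_{j=0}^{k} (-1)^j z^{2j}/(2j)!` and
`T_{2k+1}(z) = ∑_{j=0}^{k} (-1)^j z^{2j+1}/(2j+1)!`. -/
noncomputable def truncTrig (n : ℕ) (z : ℂ) : ℂ :=
  if n % 2 = 0 then
    ∑ j ∈ Finset.range (n / 2 + 1), (-1 : ℂ) ^ j * z ^ (2 * j) / ((2 * j).factorial : ℂ)
  else
    ∑ j ∈ Finset.range (n / 2 + 1), (-1 : ℂ) ^ j * z ^ (2 * j + 1) / ((2 * j + 1).factorial : ℂ)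

lemma bern_hasse (n k : ℕ) (hk : k ≤ n) : Polynomial.hasseDeriv k (Polynomial.bernoulli n) =
    (n.choose k : ℚ) • Polynomial.bernoulli (n - k) := by
  ext i
  rw [Polynomial.hasseDeriv_coeff, Polynomial.coeff_smul, Polynomial.coeff_bernoulli,
    Polynomial.coeff_bernoulli]
  by_cases h : i + k ≤ n
  · rw [if_pos h, if_pos (by omega)]
    have h1 := Nat.choose_mul (n := n) (k := i + k) (s := k) (by omega)
    have h2 : n - (i + k) = n - k - i := by omega
    have h3 : i + k - k = i := by omega
    rw [h3] at h1
    have h4 : (n.choose (i + k) : ℚ) * ((i + k).choose k : ℚ) = n.choose k * (n - k).choose i := by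
      exact_mod_cast h1
    rw [h2, smul_eq_mul]
    linear_combination (_root_.bernoulli (n - k - i)) * h4
  · rw [if_neg h, if_neg (by omega)]
    simp

lemma bern_expand (n : ℕ) (z : ℂ) : BernoulliC n (z + 1 / 2) =
    ∑ k ∈ Finset.range (n + 1),
      (n.choose k : ℂ) * (((Polynomial.bernoulli (n - k)).eval (1 / 2 : ℚ) : ℚ) : ℂ) * z ^ k := by
  have h1 : BernoulliC n (z + 1 / 2) =
      Polynomial.aeval z (Polynomial.taylor (1 / 2 : ℚ) (Polynomial.bernoulli n)) := by
    rw [Polynomial.taylor_apply, Polynomial.aeval_comp]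
    simp [BernoulliC]
  have hd : (Polynomial.taylor (1 / 2 : ℚ) (Polynomial.bernoulli n)).natDegree < n + 1 := by
    rw [Polynomial.natDegree_taylor, Nat.lt_succ_iff, Polynomial.natDegree_le_iff_coeff_eq_zero]
    intro N hN
    rw [Polynomial.coeff_bernoulli, if_neg (by omega)]
  rw [h1, Polynomial.aeval_eq_sum_range' hd]
  refine Finset.sum_congr rfl fun k hk => ?_
  rw [Finset.mem_range] at hk
  rw [Polynomial.taylor_coeff, bern_hasse n k (by omega), Polynomial.eval_smul, Algebra.smul_def]
  simp

lemma trunc_expand (n : ℕ) (w : ℂ) : truncTrig n w =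
    ∑ k ∈ Finset.range (n + 1),
      if (n - k) % 2 = 0 then (-1 : ℂ) ^ (k / 2) * w ^ k / (k.factorial : ℂ) else 0 := by
  have he : ∀ m : ℕ, ∑ k ∈ Finset.range (2 * m + 1),
      (if k % 2 = 0 then (-1 : ℂ) ^ (k / 2) * w ^ k / (k.factorial : ℂ) else 0) =
      ∑ j ∈ Finset.range (m + 1), (-1 : ℂ) ^ j * w ^ (2 * j) / ((2 * j).factorial : ℂ) := by
    intro m
    induction m with
    | zero => simp
    | succ m ih =>
      rw [Finset.sum_range_succ _ (m + 1), ← ih, show 2 * (m + 1) + 1 = 2 * m + 1 + 1 + 1 by ring,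
        Finset.sum_range_succ, Finset.sum_range_succ, if_neg (by omega), if_pos (by omega),
        show (2 * m + 1 + 1) / 2 = m + 1 by omega, show 2 * m + 1 + 1 = 2 * (m + 1) by ring]
      ring
  have ho : ∀ m : ℕ, ∑ k ∈ Finset.range (2 * m + 1 + 1),
      (if k % 2 = 1 then (-1 : ℂ) ^ (k / 2) * w ^ k / (k.factorial : ℂ) else 0) =
      ∑ j ∈ Finset.range (m + 1), (-1 : ℂ) ^ j * w ^ (2 * j + 1) / ((2 * j + 1).factorial : ℂ) := by
    intro m
    induction m with
    | zero => simp [Finset.sum_range_succ]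
    | succ m ih =>
      rw [Finset.sum_range_succ _ (m + 1), ← ih,
        show 2 * (m + 1) + 1 + 1 = 2 * m + 1 + 1 + 1 + 1 by ring,
        Finset.sum_range_succ, Finset.sum_range_succ, if_neg (by omega), if_pos (by omega),
        show (2 * m + 1 + 1 + 1) / 2 = m + 1 by omega,
        show 2 * m + 1 + 1 + 1 = 2 * (m + 1) + 1 by ring]
      ring
  unfold truncTrig
  by_cases h : n % 2 = 0
  · obtain ⟨m, rfl⟩ : ∃ m, n = 2 * m := ⟨n / 2, by omega⟩
    rw [if_pos h, show 2 * m / 2 = m by omega, ← he]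
    refine Finset.sum_congr rfl fun k hk => ?_
    rw [Finset.mem_range] at hk
    exact if_congr (by omega) rfl rfl
  · obtain ⟨m, rfl⟩ : ∃ m, n = 2 * m + 1 := ⟨n / 2, by omega⟩
    rw [if_neg h, show (2 * m + 1) / 2 = m by omega, ← ho]
    refine Finset.sum_congr rfl fun k hk => ?_
    rw [Finset.mem_range] at hk
    exact if_congr (by omega) rfl rfl

lemma bern_odd (m : ℕ) (h : ¬ m % 2 = 0) : (Polynomial.bernoulli m).eval (1 / 2 : ℚ) = 0 := by
  have h1 := Polynomial.bernoulli_eval_one_sub m (1 / 2)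
  rw [Odd.neg_one_pow (Nat.odd_iff.2 (by omega))] at h1
  norm_num at h1
  norm_num
  linarith

lemma bern_even (k : ℕ) :
    |(-1 : ℝ) ^ k * (2 * π) ^ (2 * k) / (2 * ((2 * k).factorial : ℝ)) *
      (((Polynomial.bernoulli (2 * k)).eval (1 / 2 : ℚ) : ℚ) : ℝ) - 1| < (1 / 2) ^ (2 * k) := by
  rcases eq_or_ne k 0 with rfl | hk
  · norm_num [abs_lt]
  have hs := hasSum_one_div_nat_pow_mul_cos hk (x := 1 / 2) (by constructor <;> norm_num)
  have hev : (Polynomial.map (algebraMap ℚ ℝ) (Polynomial.bernoulli (2 * k))).eval (1 / 2 : ℝ) =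
      (((Polynomial.bernoulli (2 * k)).eval (1 / 2 : ℚ) : ℚ) : ℝ) := by
    have := Polynomial.eval_map_apply (f := algebraMap ℚ ℝ) (p := Polynomial.bernoulli (2 * k)) (1 / 2 : ℚ)
    simpa using this
  rw [hev] at hs
  set b : ℝ := (((Polynomial.bernoulli (2 * k)).eval (1 / 2 : ℚ) : ℚ) : ℝ)
  set L : ℝ := (-1 : ℝ) ^ k * (2 * π) ^ (2 * k) / (2 * ((2 * k).factorial : ℝ)) * b with hL
  have hs2 := (hasSum_nat_add_iff' 1).2 hs
  have hs3 := hs2.neg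
  have hlim : -((-1 : ℝ) ^ (k + 1) * (2 * π) ^ (2 * k) / 2 / ((2 * k).factorial : ℝ) * b -
      ∑ i ∈ Finset.range 1, 1 / (i : ℝ) ^ (2 * k) * Real.cos (2 * π * i * (1 / 2))) = L := by
    rw [hL, Finset.sum_range_one, pow_succ]
    have : (1 : ℝ) / ((0 : ℕ) : ℝ) ^ (2 * k) = 0 := by
      rw [Nat.cast_zero, zero_pow (by omega)]; simp
    rw [this]
    field_simp
    ring
  rw [hlim] at hs3
  have hs4 : HasSum (fun i : ℕ => (-1 : ℝ) ^ i * (1 / ((i : ℝ) + 1) ^ (2 * k))) L := by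
    refine Eq.subst (motive := fun f : ℕ → ℝ => HasSum f L) (funext fun i => ?_) hs3
    have hcos : Real.cos (2 * π * ((i + 1 : ℕ) : ℝ) * (1 / 2)) = (-1) ^ (i + 1) := by
      rw [← Real.cos_nat_mul_pi]; congr 1; ring
    rw [hcos, pow_succ]; push_cast; ring
  have ht := hs4.tendsto_sum_nat
  have ha : Antitone (fun i : ℕ => 1 / ((i : ℝ) + 1) ^ (2 * k)) := by
    intro i j hij
    have : (i : ℝ) ≤ j := by exact_mod_cast hij
    dsimp only
    gcongr
  have hu := ha.tendsto_le_alternating_series ht 0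
  have hl := ha.alternating_series_le_tendsto ht 2
  simp only [Finset.sum_range_succ, Finset.sum_range_zero] at hu hl
  norm_num at hu hl
  have h34 : ((4 : ℝ) ^ (2 * k))⁻¹ < ((3 : ℝ) ^ (2 * k))⁻¹ := by
    have : (3 : ℝ) ^ (2 * k) < 4 ^ (2 * k) := pow_lt_pow_left₀ (by norm_num) (by norm_num) (by omega)
    gcongr
  have hp : (0 : ℝ) < (1 / 2) ^ (2 * k) := by positivity
  have he : ((1 : ℝ) / 2) ^ (2 * k) = (2 ^ (2 * k))⁻¹ := by rw [one_div, inv_pow]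
  rw [abs_lt]
  constructor
  · rw [he]; linarith
  · linarith

lemma bern_evenC (m : ℕ) (hm : m % 2 = 0) :
    ‖(-1 : ℂ) ^ (m / 2) * (2 * (π : ℂ)) ^ m / (2 * (m.factorial : ℂ)) *
      (((Polynomial.bernoulli m).eval (1 / 2 : ℚ) : ℚ) : ℂ) - 1‖ < (1 / 2) ^ m := by
  obtain ⟨k, rfl⟩ : ∃ m', m = 2 * m' := ⟨m / 2, by omega⟩
  have := bern_even k
  rw [show 2 * k / 2 = k by omega]
  rw [← Real.norm_eq_abs, ← Complex.norm_real] at this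
  push_cast at this ⊢
  exact this

theorem bernoulli_trig_estimate (n : ℕ) (z : ℂ) :
    ‖((-1 : ℂ) ^ (n / 2) * (2 * (π : ℂ)) ^ n / (2 * (n.factorial : ℂ)) *
        BernoulliC n (z + 1 / 2) - truncTrig n (2 * (π : ℂ) * z))‖ <
      (2 : ℝ) ^ (-(n : ℤ)) * Real.exp (4 * π * ‖z‖) := by
  rw [bern_expand, trunc_expand, Finset.mul_sum, ← Finset.sum_sub_distrib]
  refine (norm_sum_le _ _).trans_lt ?_
  have hterm : ∀ k ∈ Finset.range (n + 1),
      ‖(-1 : ℂ) ^ (n / 2) * (2 * (π : ℂ)) ^ n / (2 * (n.factorial : ℂ)) *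
        ((n.choose k : ℂ) * (((Polynomial.bernoulli (n - k)).eval (1 / 2 : ℚ) : ℚ) : ℂ) * z ^ k) -
        (if (n - k) % 2 = 0 then (-1 : ℂ) ^ (k / 2) * (2 * (π : ℂ) * z) ^ k / (k.factorial : ℂ)
          else 0)‖ =
      (2 * π * ‖z‖) ^ k / (k.factorial : ℝ) * (if (n - k) % 2 = 0 then
       ‖(-1 : ℂ) ^ ((n - k) / 2) * (2 * (π : ℂ)) ^ (n - k) / (2 * ((n - k).factorial : ℂ)) *
      (((Polynomial.bernoulli (n - k)).eval (1 / 2 : ℚ) : ℚ) : ℂ) - 1‖ else 0) := by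
    intro k hk
    rw [Finset.mem_range] at hk
    split_ifs with h
    · have hn : ‖(-1 : ℂ) ^ (k / 2) * (2 * (π : ℂ) * z) ^ k / (k.factorial : ℂ)‖ =
          (2 * π * ‖z‖) ^ k / (k.factorial : ℝ) := by
        simp [abs_of_pos Real.pi_pos]
      rw [← hn, ← norm_mul]
      congr 1
      obtain ⟨m, rfl⟩ : ∃ m, n = k + 2 * m := ⟨(n - k) / 2, by omega⟩
      rw [show k + 2 * m - k = 2 * m by omega, show (k + 2 * m) / 2 = k / 2 + m by omega,
        show 2 * m / 2 = m by omega]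
      have hc : (((k + 2 * m).choose k : ℕ) : ℂ) * (k.factorial : ℂ) * ((2 * m).factorial : ℂ) =
          ((k + 2 * m).factorial : ℂ) := by
        have h0 := Nat.choose_mul_factorial_mul_factorial (n := k + 2 * m) (k := k) (by omega)
        rw [show k + 2 * m - k = 2 * m by omega] at h0
        exact_mod_cast h0
      have h1 : (k.factorial : ℂ) ≠ 0 := by exact_mod_cast Nat.factorial_ne_zero _
      have h2 : ((2 * m).factorial : ℂ) ≠ 0 := by exact_mod_cast Nat.factorial_ne_zero _
      have h3 : (((k + 2 * m).choose k : ℕ) : ℂ) ≠ 0 := by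
        exact_mod_cast (Nat.choose_pos (by omega)).ne'
      rw [← hc, pow_add, pow_add, mul_pow _ z]
      field_simp
    · rw [bern_odd _ h]; simp
  rw [Finset.sum_congr rfl hterm]
  have hz : 0 ≤ 4 * π * ‖z‖ := by positivity
  have hR : ∀ k ∈ Finset.range (n + 1), (2 : ℝ) ^ (-(n : ℤ)) * ((4 * π * ‖z‖) ^ k / (k.factorial : ℝ))
      = (2 * π * ‖z‖) ^ k / (k.factorial : ℝ) * (1 / 2) ^ (n - k) := by
    intro k hk
    rw [Finset.mem_range] at hk
    obtain ⟨m, rfl⟩ : ∃ m, n = k + m := ⟨n - k, by omega⟩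
    rw [show k + m - k = m by omega, show 4 * π * ‖z‖ = 2 * (2 * π * ‖z‖) by ring, mul_pow 2,
      zpow_neg, zpow_natCast, pow_add, one_div, inv_pow]
    field_simp
  have hlt : ∀ k, (if (n - k) % 2 = 0 then
       ‖(-1 : ℂ) ^ ((n - k) / 2) * (2 * (π : ℂ)) ^ (n - k) / (2 * ((n - k).factorial : ℂ)) *
      (((Polynomial.bernoulli (n - k)).eval (1 / 2 : ℚ) : ℚ) : ℂ) - 1‖ else 0)
      < ((1 : ℝ) / 2) ^ (n - k) := by
    intro k
    split_ifs with h
    · exact bern_evenC _ h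
    · positivity
  refine lt_of_lt_of_le ?_ (mul_le_mul_of_nonneg_left (Real.sum_le_exp_of_nonneg hz (n + 1))
    (by positivity))
  rw [Finset.mul_sum, Finset.sum_congr rfl hR]
  refine Finset.sum_lt_sum (fun k _ => ?_) ⟨0, by simp, ?_⟩
  · exact mul_le_mul_of_nonneg_left (hlt k).le (by positivity)
  · exact mul_lt_mul_of_pos_left (hlt 0) (by simp)
end

section
/- (Hurwitz) For every integer n ≥ 2 and every real number x, B_n({x}) = −(n!/(2πi)^n)·∑_{k ∈ ℤ, k ≠ 0} e^{2πikx}/k^n, where {x} = x − ⌊x⌋ is the fractional part of x and the series converges absolutely. -/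
open Filter Real Complex

/-- Hurwitz's Fourier expansion of the Bernoulli polynomials: for `n ≥ 2` and real `x`,
`B_n({x}) = -(n!/(2πi)^n) ∑_{k ≠ 0} e^{2πikx}/k^n`, the series converging absolutely. -/
theorem bernoulli_fourier_series (n : ℕ) (hn : 2 ≤ n) (x : ℝ) :
    Summable (fun k : {k : ℤ // k ≠ 0} =>
      ‖(Complex.exp (2 * (π : ℂ) * Complex.I * ((k : ℤ) : ℂ) * (x : ℂ)) /
        ((k : ℤ) : ℂ) ^ n)‖) ∧
    BernoulliC n ((Int.fract x : ℝ) : ℂ) =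
      -((n.factorial : ℂ) / (2 * (π : ℂ) * Complex.I) ^ n) *
        ∑' k : {k : ℤ // k ≠ 0},
          Complex.exp (2 * (π : ℂ) * Complex.I * ((k : ℤ) : ℂ) * (x : ℂ)) /
            ((k : ℤ) : ℂ) ^ n := by
  have hx : Int.fract x ∈ Set.Icc (0 : ℝ) 1 := ⟨Int.fract_nonneg x, (Int.fract_lt_one x).le⟩
  have h := hasSum_one_div_pow_mul_fourier_mul_bernoulliFun hn hx
  have hf : (fun m : ℤ => 1 / (m : ℂ) ^ n * fourier m ((Int.fract x : ℝ) : UnitAddCircle)) =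
      fun k : ℤ => Complex.exp (2 * (π : ℂ) * Complex.I * (k : ℂ) * (x : ℂ)) / (k : ℂ) ^ n := by
    funext k
    have hc : ((Int.fract x : ℝ) : UnitAddCircle) = (x : UnitAddCircle) := by
      rw [QuotientAddGroup.eq]
      refine AddSubgroup.mem_zmultiples_iff.mpr ⟨⌊x⌋, ?_⟩
      rw [zsmul_eq_mul, mul_one, ← Int.self_sub_fract x]
      ring
    rw [hc, fourier_coe_apply]
    simp only [ofReal_one, div_one]
    ring
  rw [hf] at h
  have hs : Function.support (fun k : ℤ =>
      Complex.exp (2 * (π : ℂ) * Complex.I * (k : ℂ) * (x : ℂ)) / (k : ℂ) ^ n) ⊆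
      {k : ℤ | k ≠ 0} := by
    intro k hk hk0
    apply hk
    have : n ≠ 0 := by omega
    simp [hk0, this]
  have h2 := (hasSum_subtype_iff_of_support_subset hs).mpr h
  have h3 : ∑' k : {k : ℤ // k ≠ 0},
          Complex.exp (2 * (π : ℂ) * Complex.I * ((k : ℤ) : ℂ) * (x : ℂ)) /
            ((k : ℤ) : ℂ) ^ n = -(2 * π * I) ^ n / n.factorial * bernoulliFun n (Int.fract x) :=
    h2.tsum_eq
  refine ⟨h2.summable.norm, ?_⟩
  have hB : BernoulliC n ((Int.fract x : ℝ) : ℂ) = bernoulliFun n (Int.fract x) := by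
    unfold BernoulliC bernoulliFun
    rw [Polynomial.eval_map_algebraMap]
    exact Polynomial.aeval_algebraMap_apply ℂ (Int.fract x) _
  rw [h3, hB]
  have h4 : (2 * (π : ℂ) * I) ^ n ≠ 0 := pow_ne_zero _ Complex.two_pi_I_ne_zero
  have h5 : (n.factorial : ℂ) ≠ 0 := by exact_mod_cast n.factorial_ne_zero
  generalize (2 * (π : ℂ) * I) ^ n = a at *
  field_simp
end

section
/- For every integer n ≥ 2 and every real number x, |(2πi)^n/n! · B_n({x}) + e^{2πix} + (−1)^n·e^{−2πix}| ≤ 2^{3−n}, where {x} = x − ⌊x⌋ is the fractional part of x. In particular, the functions x ↦ (2πi)^n/n! · B_n({x}) converge uniformly on ℝ, with the stated exponential rate, to x ↦ −(e^{2πix} + (−1)^n e^{−2πix}). -/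
open Filter Real

/-- For `n ≥ 2` and real `x`,
`|(2πi)^n/n! · B_n({x}) + e^{2πix} + (-1)^n e^{-2πix}| ≤ 2^{3-n}`; in particular the
functions `x ↦ (2πi)^n/n! · B_n({x})` converge uniformly on `ℝ`, with this exponential
rate, to `x ↦ -(e^{2πix} + (-1)^n e^{-2πix})`. -/
theorem bernoulli_fract_close_to_exponentials (n : ℕ) (hn : 2 ≤ n) (x : ℝ) :
    norm ((2 * (π : ℂ) * Complex.I) ^ n / (n.factorial : ℂ) *
          BernoulliC n ((Int.fract x : ℝ) : ℂ) +
        Complex.exp (2 * (π : ℂ) * Complex.I * (x : ℂ)) +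
        (-1 : ℂ) ^ n * Complex.exp (-(2 * (π : ℂ) * Complex.I * (x : ℂ)))) ≤
      (2 : ℝ) ^ (3 - (n : ℤ)) := by
  have hy : Int.fract x ∈ Set.Icc (0 : ℝ) 1 :=
    ⟨Int.fract_nonneg x, (Int.fract_lt_one x).le⟩
  have hB : BernoulliC n ((Int.fract x : ℝ) : ℂ) = (bernoulliFun n (Int.fract x) : ℂ) := by
    rw [BernoulliC, bernoulliFun, Polynomial.eval_map_algebraMap]
    exact Polynomial.aeval_algebraMap_apply ℂ (Int.fract x) (Polynomial.bernoulli n)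
  have hx : ((Int.fract x : ℝ) : UnitAddCircle) = (x : UnitAddCircle) := by
    have h : (x : UnitAddCircle) = ((Int.fract x + (⌊x⌋ : ℤ) : ℝ) : UnitAddCircle) := by
      rw [Int.fract_add_floor]
    rw [h, AddCircle.coe_add]
    have h2 : (((⌊x⌋ : ℤ) : ℝ) : UnitAddCircle) = 0 := by
      rw [AddCircle.coe_eq_zero_iff]
      exact ⟨⌊x⌋, by simp⟩
    rw [h2, add_zero]
  have hS := hasSum_one_div_nat_pow_mul_fourier hn hy
  rw [hx] at hS
  have hS2 := (hasSum_nat_add_iff' 2).mpr hS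
  have hn0 : n ≠ 0 := by omega
  have e1 : fourier 1 (x : UnitAddCircle) = Complex.exp (2 * (π : ℂ) * Complex.I * (x : ℂ)) := by
    rw [fourier_coe_apply]; congr 1; simp
  have e2 : fourier (-1) (x : UnitAddCircle) =
      Complex.exp (-(2 * (π : ℂ) * Complex.I * (x : ℂ))) := by
    rw [fourier_coe_apply]; congr 1; simp
  have hZ := ((hasSum_nat_add_iff' 2).mpr hasSum_zeta_two).mul_left (2 * (1 / 2 : ℝ) ^ (n - 2))
  have hle := hS2.norm_le_of_bounded hZ (fun m => by
    rw [norm_mul]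
    have h1 : ‖(fourier ((m + 2 : ℕ) : ℤ) (x : UnitAddCircle) : ℂ)
        + (-1 : ℂ) ^ n * fourier (-((m + 2 : ℕ) : ℤ)) (x : UnitAddCircle)‖ ≤ 2 := by
      refine (norm_add_le _ _).trans ?_
      rw [norm_mul, norm_pow]
      simp only [fourier_apply, Circle.norm_coe, norm_neg, norm_one, one_pow]
      norm_num
    have h2 : ‖(1 : ℂ) / ((m + 2 : ℕ) : ℂ) ^ n‖
        ≤ (1 / 2 : ℝ) ^ (n - 2) * (1 / ((m + 2 : ℕ) : ℝ) ^ 2) := by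
      rw [norm_div, norm_one, norm_pow, Complex.norm_natCast]
      obtain ⟨k, rfl⟩ := Nat.exists_eq_add_of_le hn
      have : 2 + k - 2 = k := by omega
      rw [this, ← one_div_pow, ← one_div_pow, pow_add, mul_comm]
      have h3 : (1 : ℝ) / ((m + 2 : ℕ) : ℝ) ≤ 1 / 2 := by
        apply one_div_le_one_div_of_le (by norm_num)
        push_cast
        have : (0 : ℝ) ≤ m := Nat.cast_nonneg m
        linarith
      gcongr
    calc _ ≤ ((1 / 2 : ℝ) ^ (n - 2) * (1 / ((m + 2 : ℕ) : ℝ) ^ 2)) * 2 :=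
          mul_le_mul h2 h1 (norm_nonneg _) (by positivity)
      _ = _ := by ring)
  have hpi : π ^ 2 / 6 - 1 ≤ 1 := by
    have := Real.pi_lt_d2
    have := Real.pi_pos
    nlinarith
  have hpow : (2 : ℝ) ^ (3 - (n : ℤ)) = 2 * (1 / 2 : ℝ) ^ (n - 2) := by
    obtain ⟨k, rfl⟩ := Nat.exists_eq_add_of_le hn
    have h1 : 2 + k - 2 = k := by omega
    have h2 : (3 - ((2 + k : ℕ) : ℤ)) = 1 - (k : ℤ) := by push_cast; ring
    rw [h1, h2, zpow_sub₀ (by norm_num)]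
    simp [div_eq_mul_inv]
  rw [hpow, hB]
  have hfin := hle.trans (b := _) (c := 2 * (1 / 2 : ℝ) ^ (n - 2)) (by
    have : (0 : ℝ) ≤ 2 * (1 / 2 : ℝ) ^ (n - 2) := by positivity
    simp only [Finset.sum_range_succ, Finset.sum_range_zero]
    norm_num at this ⊢
    nlinarith)
  rw [← norm_neg] at hfin
  refine le_of_eq_of_le (congrArg norm ?_) hfin
  simp only [Finset.sum_range_succ, Finset.sum_range_zero, Nat.cast_zero, Nat.cast_one,
    zero_pow hn0, e1, e2]
  simp
  ring
end

section
/- For every integer n ≥ 1 and every real number y ≥ 0, B_n(y) − B_n({y}) ≤ y^n − {y}^n, where {y} = y − ⌊y⌋ is the fractional part of y. -/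
/-- The `n`-th Bernoulli polynomial evaluated at a real argument. -/
noncomputable def BernoulliR (n : ℕ) (x : ℝ) : ℝ :=
  Polynomial.aeval x (Polynomial.bernoulli n)

lemma aux_pow (x : ℝ) (hx : 0 ≤ x) (k : ℕ) :
    x ^ (k+1) + (k+1) * x ^ k ≤ (x+1)^(k+1) := by
  induction k with
  | zero => simp
  | succ k ih =>
    have h := mul_le_mul_of_nonneg_right ih (by linarith : 0 ≤ x + 1)
    have h2 : 0 ≤ ((k:ℝ)+1) * x ^ k := by positivity
    rw [pow_succ (x+1) (k+1)]
    push_cast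
    have e : (x ^ (k+1) + ((k:ℝ)+1) * x ^ k) * (x+1)
      = x ^ (k+1+1) + ((k:ℝ)+1+1) * x^(k+1) + ((k:ℝ)+1) * x ^ k := by ring
    linarith

lemma aux_step (n : ℕ) (x : ℝ) :
    BernoulliR n (1 + x) = BernoulliR n x + n * x ^ (n-1) := by
  have h := congrArg (Polynomial.aeval x) (Polynomial.bernoulli_comp_one_add_X n)
  simpa [Polynomial.aeval_comp, BernoulliR, nsmul_eq_mul] using h

lemma aux_main (k : ℕ) (x : ℝ) (hx : 0 ≤ x) (m : ℕ) :
    BernoulliR (k+1) (x + m) - BernoulliR (k+1) x ≤ (x + m) ^ (k+1) - x ^ (k+1) := by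
  induction m with
  | zero => simp
  | succ m ih =>
    have h1 := aux_step (k+1) (x + m)
    have h2 := aux_pow (x + m) (by positivity) k
    have e : x + ((m+1 : ℕ) : ℝ) = 1 + (x + m) := by push_cast; ring
    rw [e, h1, add_comm 1 (x + (m:ℝ))]
    simp only [Nat.add_sub_cancel]
    push_cast
    linarith

/-- For `n ≥ 1` and real `y ≥ 0`, `B_n(y) - B_n({y}) ≤ y^n - {y}^n`. -/
theorem bernoulli_sub_bernoulli_fract_upper (n : ℕ) (hn : 1 ≤ n) (y : ℝ) (hy : 0 ≤ y) :
    BernoulliR n y - BernoulliR n (Int.fract y) ≤ y ^ n - Int.fract y ^ n := by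
  obtain ⟨k, rfl⟩ : ∃ k, n = k + 1 := ⟨n - 1, by omega⟩
  have h := aux_main k (Int.fract y) (Int.fract_nonneg y) ⌊y⌋₊
  have e : Int.fract y + (⌊y⌋₊ : ℝ) = y := by
    rw [natCast_floor_eq_intCast_floor hy]; exact Int.fract_add_floor y
  rwa [e] at h
end

section
/- (Dieudonné) For every ε with 0 < ε < 1, sup over complex z with 0 < |z| ≤ 1 − ε of |n!·(e^{nz} − P_n(nz))/(nz)^n − 1/(1 − z)| tends to 0 as n → ∞, where P_n(w) = ∑_{k=0}^{n−1} w^k/k! is the truncated exponential series. Equivalently, n!·(e^{nz} − P_n(nz))/(nz)^n = (1/(1−z))·(1 + λ_n(z)) with λ_n → 0 uniformly on {z : 0 < |z| ≤ 1 − ε}. -/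
open Filter

noncomputable def dcoef (n j : ℕ) : ℝ := (n.factorial : ℝ) * (n : ℝ) ^ j / ((n + j).factorial : ℝ)

lemma dcoef_nonneg (n j : ℕ) : 0 ≤ dcoef n j := by
  unfold dcoef; positivity

lemma dcoef_le_one (n j : ℕ) : dcoef n j ≤ 1 := by
  unfold dcoef
  rw [div_le_one (by positivity)]
  have h : n.factorial * n ^ j ≤ (n + j).factorial :=
    le_trans (Nat.mul_le_mul_left _ (Nat.pow_le_pow_left (Nat.le_succ n) j))
      (Nat.factorial_mul_pow_le_factorial)
  exact_mod_cast h

lemma dcoef_succ (n j : ℕ) :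
    dcoef n (j + 1) = dcoef n j * ((n : ℝ) / ((n : ℝ) + ((j : ℝ) + 1))) := by
  unfold dcoef
  rw [← add_assoc, Nat.factorial_succ]
  push_cast
  have h : ((n : ℝ) + ((j : ℝ) + 1)) ≠ 0 := by positivity
  have h' : ((n : ℝ) + (j : ℝ) + 1) ≠ 0 := by positivity
  have h2 : ((n + j).factorial : ℝ) ≠ 0 := by positivity
  field_simp
  ring

lemma dcoef_tendsto (j : ℕ) : Tendsto (fun n => dcoef n j) atTop (nhds 1) := by
  induction j with
  | zero =>
    have : (fun n => dcoef n 0) = fun _ => 1 := by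
      funext n
      unfold dcoef
      have h2 : (n.factorial : ℝ) ≠ 0 := by positivity
      simp [h2]
    rw [this]; exact tendsto_const_nhds
  | succ j ih =>
    simp_rw [dcoef_succ]
    simpa using ih.mul (tendsto_natCast_div_add_atTop ((j : ℝ) + 1))

lemma dcoef_hasSum (n : ℕ) (hn : n ≠ 0) (z : ℂ) (hz : z ≠ 0) :
    HasSum (fun j => (dcoef n j : ℂ) * z ^ j)
      ((n.factorial : ℂ) *
            (Complex.exp ((n : ℂ) * z) -
              ∑ k ∈ Finset.range n, ((n : ℂ) * z) ^ k / (k.factorial : ℂ)) /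
          ((n : ℂ) * z) ^ n) := by
  have h := NormedSpace.expSeries_div_hasSum_exp ((n : ℂ) * z)
  rw [← Complex.exp_eq_exp_ℂ] at h
  have h1 := (((hasSum_nat_add_iff' n).2 h).mul_left (n.factorial : ℂ)).div_const
    (((n : ℂ) * z) ^ n)
  refine Eq.subst (motive := fun f => HasSum f _) (funext fun j => ?_) h1
  symm
  have hn' : (n : ℂ) ≠ 0 := by exact_mod_cast hn
  have h2 : ((n + j).factorial : ℂ) ≠ 0 := by exact_mod_cast (n + j).factorial_ne_zero
  unfold dcoef
  rw [add_comm j n]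
  push_cast
  rw [pow_add, mul_pow, mul_pow]
  field_simp

theorem dieudonne_truncExp_estimate (ε : ℝ) (hε0 : 0 < ε) (hε1 : ε < 1) :
    TendstoUniformlyOn
      (fun (n : ℕ) (z : ℂ) =>
        (n.factorial : ℂ) *
            (Complex.exp ((n : ℂ) * z) -
              ∑ k ∈ Finset.range n, ((n : ℂ) * z) ^ k / (k.factorial : ℂ)) /
          ((n : ℂ) * z) ^ n)
      (fun z => 1 / (1 - z)) atTop
      {z : ℂ | 0 < ‖z‖ ∧ ‖z‖ ≤ 1 - ε} := by
  have hr0 : 0 ≤ 1 - ε := by linarith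
  have hr1 : 1 - ε < 1 := by linarith
  have hs := summable_geometric_of_lt_one hr0 hr1
  have hb : ∀ n j, ‖(1 - dcoef n j) * (1 - ε) ^ j‖ ≤ (1 - ε) ^ j := by
    intro n j
    have h0 := dcoef_nonneg n j
    have h1 := dcoef_le_one n j
    have hp : 0 ≤ (1 - ε) ^ j := by positivity
    rw [Real.norm_of_nonneg (mul_nonneg (by linarith) hp)]
    nlinarith
  have ht : Tendsto (fun n => ∑' j, (1 - dcoef n j) * (1 - ε) ^ j) atTop (nhds 0) := by
    have := tendsto_tsum_of_dominated_convergence (𝓕 := atTop)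
      (f := fun n j => (1 - dcoef n j) * (1 - ε) ^ j) (g := fun _ => (0 : ℝ)) hs
      (fun j => by
        simpa using ((dcoef_tendsto j).const_sub 1).mul_const ((1 - ε) ^ j))
      (Eventually.of_forall fun n j => hb n j)
    simpa using this
  rw [Metric.tendstoUniformlyOn_iff]
  intro δ hδ
  filter_upwards [ht.eventually (gt_mem_nhds hδ), eventually_ne_atTop 0] with n hn hn0 z hz
  have hz0 : z ≠ 0 := norm_pos_iff.1 hz.1
  have hg := hasSum_geometric_of_norm_lt_one (lt_of_le_of_lt hz.2 hr1)
  have hd := hg.sub (dcoef_hasSum n hn0 z hz0)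
  have hS : Summable fun j => (1 - dcoef n j) * (1 - ε) ^ j :=
    Summable.of_norm_bounded hs (hb n)
  rw [dist_eq_norm, one_div]
  refine lt_of_le_of_lt ?_ hn
  rw [← hd.tsum_eq]
  refine tsum_of_norm_bounded hS.hasSum fun j => ?_
  have h1 := dcoef_le_one n j
  have : z ^ j - (dcoef n j : ℂ) * z ^ j = ((1 - dcoef n j : ℝ) : ℂ) * z ^ j := by
    push_cast; ring
  rw [this, norm_mul, Complex.norm_real, Real.norm_of_nonneg (by linarith), norm_pow]
  exact mul_le_mul_of_nonneg_left (pow_le_pow_left₀ (norm_nonneg _) hz.2 j) (by linarith)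
end

section
/- For every real number x with |x| < 1/(2πe) there exists a sequence (x_n) of real numbers with B_n(n·x_n) = 0 for each sufficiently large n and x_n → x as n → ∞; i.e., every point of the open interval (−1/(2πe), 1/(2πe)) is an accumulation point of the rescaled real zeros of the Bernoulli polynomials. -/
open Filter Real

lemma bernR_shift (n m : ℕ) (y : ℝ) : BernoulliR n (y + m) =
    BernoulliR n y + n * ∑ k ∈ Finset.range m, (y + k) ^ (n - 1) := by
  have step : ∀ z : ℝ, BernoulliR n (1 + z) = BernoulliR n z + n * z ^ (n - 1) := by
    intro z
    have h := congrArg (Polynomial.aeval z) (Polynomial.bernoulli_comp_one_add_X n)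
    simpa [BernoulliR, Polynomial.aeval_comp] using h
  induction m with
  | zero => simp
  | succ m ih =>
    rw [Finset.sum_range_succ, mul_add, ← add_assoc, ← ih, ← step]
    congr 1
    push_cast
    ring

lemma sum_ge (f : ℕ → ℝ) (S : ℝ) (hf : HasSum f S) (h1 : f 1 = 1)
    (hb : ∀ j, |f j| ≤ 1 / (j : ℝ) ^ 2) : 1 / 4 ≤ S := by
  have hz := hasSum_zeta_two
  have h2 : HasSum (fun j : ℕ => if j = 1 then (2 : ℝ) else 0) 2 := hasSum_ite_eq 1 2
  have h3 := h2.sub hz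
  have h4 : 2 - π ^ 2 / 6 ≤ S := by
    refine hasSum_le (fun j => ?_) h3 hf
    by_cases hj : j = 1
    · subst hj; norm_num [h1]
    · have := neg_abs_le (f j)
      have := hb j
      simp only [hj, if_false]
      linarith
  have := Real.pi_lt_d2
  have := Real.pi_pos
  nlinarith

lemma scale_sum {n : ℕ} {B T : ℝ}
    (h : 1 / 4 ≤ T * ((2 * π) ^ n / 2 / n.factorial * B)) (hT : T = 1 ∨ T = -1) :
    1 / 2 * (n.factorial / (2 * π) ^ n) ≤ T * B := by
  have h1 : (0 : ℝ) < (2 * π) ^ n := by positivity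
  have h2 : (0 : ℝ) < n.factorial := by positivity
  have e : T * B = (2 * (n.factorial / (2 * π) ^ n)) * (T * ((2 * π) ^ n / 2 / n.factorial * B)) := by
    field_simp
  rw [e]
  have h3 : (0 : ℝ) < n.factorial / (2 * π) ^ n := by positivity
  nlinarith

lemma abs_term_le {n j : ℕ} (hn : 2 ≤ n) (c : ℝ) (hc : |c| ≤ 1) :
    |1 / (j : ℝ) ^ n * c| ≤ 1 / (j : ℝ) ^ 2 := by
  rcases Nat.eq_zero_or_pos j with rfl | hj
  · simp [show n ≠ 0 by omega]
  have hj' : (1 : ℝ) ≤ j := by exact_mod_cast hj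
  rw [abs_mul, abs_of_nonneg (by positivity)]
  calc 1 / (j : ℝ) ^ n * |c| ≤ 1 / (j : ℝ) ^ n * 1 := by gcongr
    _ ≤ 1 / (j : ℝ) ^ 2 := by
      rw [mul_one]
      exact one_div_le_one_div_of_le (by positivity) (pow_le_pow_right₀ hj' hn)

lemma bern_even_s16 {k : ℕ} (hk : k ≠ 0) {y : ℝ} (hy : y ∈ Set.Icc (0 : ℝ) 1) (T : ℝ)
    (hT : T = 1 ∨ T = -1) (hc : Real.cos (2 * π * y) = T) :
    1 / 2 * ((2 * k).factorial / (2 * π) ^ (2 * k)) ≤ (T * (-1) ^ (k + 1)) * BernoulliR (2 * k) y := by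
  have h := (hasSum_one_div_nat_pow_mul_cos hk hy).mul_left T
  have h' := sum_ge _ _ h (by
      simp only [Nat.cast_one, one_pow, mul_one, hc]; rcases hT with rfl | rfl <;> norm_num) (by
    intro j
    have := abs_term_le (n := 2 * k) (j := j) (by omega) _ (Real.abs_cos_le_one (2 * π * j * y))
    rw [abs_mul]
    rcases hT with rfl | rfl <;> simpa using this)
  apply scale_sum
  · refine h'.trans_eq ?_
    simp only [BernoulliR, Polynomial.eval_map_algebraMap]
    ring
  · rcases hT with rfl | rfl <;> rcases neg_one_pow_eq_or ℝ (k + 1) with h | h <;> simp [h]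

lemma bern_odd_s16 {k : ℕ} (hk : k ≠ 0) {y : ℝ} (hy : y ∈ Set.Icc (0 : ℝ) 1) (T : ℝ)
    (hT : T = 1 ∨ T = -1) (hc : Real.sin (2 * π * y) = T) :
    1 / 2 * ((2 * k + 1).factorial / (2 * π) ^ (2 * k + 1)) ≤
      (T * (-1) ^ (k + 1)) * BernoulliR (2 * k + 1) y := by
  have h := (hasSum_one_div_nat_pow_mul_sin hk hy).mul_left T
  have h' := sum_ge _ _ h (by
      simp only [Nat.cast_one, one_pow, mul_one, hc]; rcases hT with rfl | rfl <;> norm_num) (by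
    intro j
    have := abs_term_le (n := 2 * k + 1) (j := j) (by omega) _ (Real.abs_sin_le_one (2 * π * j * y))
    rw [abs_mul]
    rcases hT with rfl | rfl <;> simpa using this)
  apply scale_sum
  · refine h'.trans_eq ?_
    simp only [BernoulliR, Polynomial.eval_map_algebraMap]
    ring
  · rcases hT with rfl | rfl <;> rcases neg_one_pow_eq_or ℝ (k + 1) with h | h <;> simp [h]

lemma bern_osc {n : ℕ} (hn : 2 ≤ n) : ∃ y₁ ∈ Set.Icc (0 : ℝ) 1, ∃ y₂ ∈ Set.Icc (0 : ℝ) 1,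
    1 / 2 * (n.factorial / (2 * π) ^ n) ≤ BernoulliR n y₁ ∧
    1 / 2 * (n.factorial / (2 * π) ^ n) ≤ - BernoulliR n y₂ := by
  rcases Nat.even_or_odd' n with ⟨k, rfl | rfl⟩
  · have a := bern_even_s16 (k := k) (by omega) (y := 0) (by norm_num) 1 (by norm_num) (by simp)
    have b := bern_even_s16 (k := k) (by omega) (y := 1 / 2) (by norm_num) (-1) (by norm_num)
      (by rw [show 2 * π * (1 / 2) = π by ring]; simp)
    rcases neg_one_pow_eq_or ℝ (k + 1) with h | h <;> rw [h] at a b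
    · exact ⟨0, by norm_num, 1 / 2, by norm_num, by simpa using a, by simpa using b⟩
    · exact ⟨1 / 2, by norm_num, 0, by norm_num, by simpa using b, by simpa using a⟩
  · have a := bern_odd_s16 (k := k) (by omega) (y := 1 / 4) (by norm_num) 1 (by norm_num)
      (by rw [show 2 * π * (1 / 4) = π / 2 by ring]; simp)
    have b := bern_odd_s16 (k := k) (by omega) (y := 3 / 4) (by norm_num) (-1) (by norm_num)
      (by rw [show 2 * π * (3 / 4) = π / 2 + π by ring, Real.sin_add_pi]; simp)
    rcases neg_one_pow_eq_or ℝ (k + 1) with h | h <;> rw [h] at a b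
    · exact ⟨1 / 4, by norm_num, 3 / 4, by norm_num, by simpa using a, by simpa using b⟩
    · exact ⟨3 / 4, by norm_num, 1 / 4, by norm_num, by simpa using b, by simpa using a⟩

lemma shift_bound {n m : ℕ} (hn : 2 ≤ n) {y : ℝ} (hy : y ∈ Set.Icc (0 : ℝ) 1) :
    |BernoulliR n (y + m) - BernoulliR n y| ≤ n * ((m : ℝ) + 1) ^ n := by
  rw [bernR_shift, add_sub_cancel_left]
  have h0 : 0 ≤ ∑ k ∈ Finset.range m, (y + k) ^ (n - 1) :=
    Finset.sum_nonneg fun k _ => pow_nonneg (add_nonneg hy.1 k.cast_nonneg) _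
  rw [abs_of_nonneg (by positivity)]
  gcongr
  have : ∑ k ∈ Finset.range m, (y + k) ^ (n - 1) ≤ ∑ k ∈ Finset.range m, ((m : ℝ) + 1) ^ (n - 1) := by
    refine Finset.sum_le_sum fun k hk => pow_le_pow_left₀ (add_nonneg hy.1 k.cast_nonneg) ?_ _
    have : (k : ℝ) ≤ m := by exact_mod_cast (Finset.mem_range.1 hk).le
    linarith [hy.2]
  refine this.trans ?_
  rw [Finset.sum_const, Finset.card_range, nsmul_eq_mul]
  obtain ⟨p, rfl⟩ : ∃ p, n = p + 1 := ⟨n - 1, by omega⟩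
  rw [Nat.add_sub_cancel, pow_succ']
  gcongr
  linarith

lemma root_nonneg (x : ℝ) (h0 : 0 ≤ x) (hx : x < 1 / (2 * π * Real.exp 1)) :
    ∀ᶠ n : ℕ in atTop, ∃ z, BernoulliR n z = 0 ∧ |z - n * x| ≤ 1 := by
  obtain ⟨a, hxa, ha⟩ := exists_between hx
  have ha0 : 0 ≤ a := h0.trans hxa.le
  have hpos : 0 < 2 * π * Real.exp 1 := by positivity
  have hr : 2 * π * Real.exp 1 * a < 1 := by
    rw [lt_div_iff₀ hpos] at ha; linarith
  have t := (tendsto_self_mul_const_pow_of_lt_one (by positivity) hr).eventually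
    (gt_mem_nhds (show (0 : ℝ) < 1 / 2 by norm_num))
  have t2 : ∀ᶠ n : ℕ in atTop, 1 ≤ (n : ℝ) * (a - x) :=
    (tendsto_natCast_atTop_atTop.atTop_mul_const (sub_pos.2 hxa)).eventually_ge_atTop 1
  filter_upwards [t, t2, eventually_ge_atTop 2] with n h1 h2 hn
  set m := ⌊(n : ℝ) * x⌋₊ with hm
  have hm1 : (m : ℝ) ≤ n * x := Nat.floor_le (by positivity)
  have hm2 : (n : ℝ) * x < m + 1 := Nat.lt_floor_add_one _
  have key : n * ((m : ℝ) + 1) ^ n < 1 / 2 * (n.factorial / (2 * π) ^ n) := by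
    have hf : (n : ℝ) ^ n / n.factorial ≤ Real.exp n := Real.pow_div_factorial_le_exp _ (by positivity) n
    rw [div_le_iff₀ (by positivity)] at hf
    have : (n : ℝ) * ((m : ℝ) + 1) ^ n ≤ n * (n * a) ^ n := by
      gcongr; linarith
    refine this.trans_lt ?_
    rw [← mul_div_assoc, lt_div_iff₀ (by positivity)]
    have e : Real.exp n = Real.exp 1 ^ n := by rw [← Real.exp_nat_mul, mul_one]
    rw [e] at hf
    have h2f : (0 : ℝ) < n.factorial := by positivity
    calc n * (n * a) ^ n * (2 * π) ^ n = (n : ℝ) ^ n * (n * (a * (2 * π)) ^ n) := by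
          simp only [mul_pow]; ring
      _ ≤ (Real.exp 1 ^ n * n.factorial) * (n * (a * (2 * π)) ^ n) := by gcongr
      _ = (n * (2 * π * Real.exp 1 * a) ^ n) * n.factorial := by simp only [mul_pow]; ring
      _ < _ := by gcongr
  obtain ⟨y₁, hy₁, y₂, hy₂, b1, b2⟩ := bern_osc hn
  have s1 := abs_le.1 (shift_bound (m := m) hn hy₁)
  have s2 := abs_le.1 (shift_bound (m := m) hn hy₂)
  have hc : Continuous (BernoulliR n) := Polynomial.continuous_aeval _
  have hz : (0 : ℝ) ∈ Set.uIcc (BernoulliR n (y₂ + m)) (BernoulliR n (y₁ + m)) := by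
    rw [Set.mem_uIcc]; left; constructor <;> linarith [s1.1, s2.2]
  obtain ⟨z, hz, hz0⟩ := intermediate_value_uIcc hc.continuousOn hz
  refine ⟨z, hz0, ?_⟩
  have hz' : z ∈ Set.Icc (m : ℝ) (m + 1) := by
    refine Set.uIcc_subset_Icc ?_ ?_ hz
    · exact ⟨by linarith [hy₂.1], by linarith [hy₂.2]⟩
    · exact ⟨by linarith [hy₁.1], by linarith [hy₁.2]⟩
  rw [abs_le]
  constructor <;> linarith [hz'.1, hz'.2]

lemma root_all (x : ℝ) (hx : |x| < 1 / (2 * π * Real.exp 1)) :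
    ∀ᶠ n : ℕ in atTop, ∃ z, BernoulliR n z = 0 ∧ |z - n * x| ≤ 2 := by
  rcases le_total 0 x with h | h
  · rw [abs_of_nonneg h] at hx
    filter_upwards [root_nonneg x h hx] with n ⟨z, hz, hb⟩
    exact ⟨z, hz, by linarith⟩
  · rw [abs_of_nonpos h] at hx
    filter_upwards [root_nonneg (-x) (by linarith) hx] with n ⟨z, hz, hb⟩
    refine ⟨1 - z, ?_, ?_⟩
    · have h := congrArg (Polynomial.aeval z) (Polynomial.bernoulli_comp_one_sub_X n)
      simp only [Polynomial.aeval_comp, map_sub, map_one, Polynomial.aeval_X, map_mul, map_pow, map_neg] at h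
      unfold BernoulliR at *
      rw [h, hz, mul_zero]
    · rw [abs_le] at *
      constructor <;> linarith [hb.1, hb.2]

/-- Every point of the open interval `(-1/(2πe), 1/(2πe))` is an accumulation point of
the rescaled real zeros of the Bernoulli polynomials: there is a sequence `xₙ → x` with
`Bₙ(n xₙ) = 0` for all sufficiently large `n`. -/
theorem bernoulli_rescaled_real_roots_dense
    (x : ℝ) (hx : |x| < 1 / (2 * π * Real.exp 1)) :
    ∃ xn : ℕ → ℝ,
      (∀ᶠ n : ℕ in atTop, BernoulliR n ((n : ℝ) * xn n) = 0) ∧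
      Tendsto xn atTop (nhds x) := by
  have h := root_all x hx
  have h' : ∀ n : ℕ, ∃ z, (∃ z, BernoulliR n z = 0 ∧ |z - n * x| ≤ 2) →
      BernoulliR n z = 0 ∧ |z - n * x| ≤ 2 := by
    intro n
    by_cases hh : ∃ z, BernoulliR n z = 0 ∧ |z - n * x| ≤ 2
    · obtain ⟨z, hz⟩ := hh
      exact ⟨z, fun _ => hz⟩
    · exact ⟨0, fun c => absurd c hh⟩
  choose z hz using h'
  refine ⟨fun n => z n / n, ?_, ?_⟩
  · filter_upwards [h, eventually_ge_atTop 1] with n hn h1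
    have : (n : ℝ) ≠ 0 := by positivity
    rw [mul_div_cancel₀ _ this]
    exact (hz n hn).1
  · rw [tendsto_iff_dist_tendsto_zero]
    refine squeeze_zero' (Eventually.of_forall fun n => dist_nonneg) ?_
      (tendsto_const_div_atTop_nhds_zero_nat 2)
    filter_upwards [h, eventually_ge_atTop 1] with n hn h1
    have hp : (0 : ℝ) < n := by positivity
    rw [Real.dist_eq, le_div_iff₀ hp]
    have := (hz n hn).2
    calc |z n / n - x| * n = |z n / n - x| * |(n : ℝ)| := by rw [abs_of_pos hp]
      _ = |z n - n * x| := by rw [← abs_mul]; congr 1; field_simp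
      _ ≤ 2 := this
end

section
/- The rescaled real zeros of the Bernoulli polynomials are asymptotically uniformly distributed on [−1/(2πe), 1/(2πe)]: for all real numbers a < b with [a, b] ⊆ (−1/(2πe), 1/(2πe)), the number of real zeros of B_n lying in the interval [n·a, n·b] (counted as elements of the zero set), divided by n, tends to 2·(b − a) as n → ∞. -/
open Filter Real

noncomputable def gB (k : ℕ) (x : ℝ) : ℝ :=
  -((2 * π) ^ k / (2 * (k.factorial : ℝ))) * bernoulliFun k x

lemma gB_zero_iff (k : ℕ) (x : ℝ) : BernoulliR k x = 0 ↔ gB k x = 0 := by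
  have h : BernoulliR k x = bernoulliFun k x := by
    simp [BernoulliR, bernoulliFun, Polynomial.eval_map_algebraMap]
  have : (2 * π) ^ k / (2 * (k.factorial : ℝ)) ≠ 0 := by positivity
  rw [h, gB, mul_eq_zero, neg_eq_zero]
  tauto

lemma gB_hasDerivAt (k : ℕ) (x : ℝ) :
    HasDerivAt (gB (k + 1)) (2 * π * gB k x) x := by
  have h := (hasDerivAt_bernoulliFun (k + 1) x).const_mul
    (-((2 * π) ^ (k + 1) / (2 * ((k + 1).factorial : ℝ))))
  have e : -((2 * π) ^ (k + 1) / (2 * ((k + 1).factorial : ℝ))) *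
      (((k + 1 : ℕ) : ℝ) * bernoulliFun (k + 1 - 1) x) = 2 * π * gB k x := by
    have : (k.factorial : ℝ) ≠ 0 := by positivity
    have h3 : (k : ℝ) + 1 ≠ 0 := by positivity
    rw [gB, Nat.factorial_succ, Nat.add_sub_cancel]
    push_cast
    field_simp
    try ring
  rw [e] at h
  exact h

lemma fourier_term (k : ℕ) (x : ℝ) :
    (fourier (1 : ℤ) (x : UnitAddCircle) + (-1 : ℂ) ^ k * fourier (-1 : ℤ) (x : UnitAddCircle))
      = 2 * Complex.I ^ k * (Real.cos (2 * π * x - k * π / 2) : ℝ) := by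
  have hI : Complex.I ^ k = Complex.exp (k * (π / 2 * Complex.I)) := by
    rw [Complex.exp_nat_mul, Complex.exp_pi_div_two_mul_I]
  have hm : (-1 : ℂ) ^ k = Complex.exp (k * (π * Complex.I)) := by
    rw [Complex.exp_nat_mul, Complex.exp_pi_mul_I]
  rw [fourier_coe_apply, fourier_coe_apply, hI, hm, Complex.ofReal_cos, Complex.cos]
  have e : ∀ A B C : ℂ, 2 * A * ((B + C) / 2) = A * B + A * C := by intros; ring
  rw [e, ← Complex.exp_add, ← Complex.exp_add, ← Complex.exp_add]
  push_cast
  congr 2 <;> ring_nf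

lemma gB_unit (k : ℕ) (hk : 2 ≤ k) (x : ℝ) (hx : x ∈ Set.Icc (0 : ℝ) 1) :
    |gB k x - Real.cos (2 * π * x - k * π / 2)| ≤ (1 / 2) ^ (k - 2) * (π ^ 2 / 6) := by
  have h := hasSum_one_div_nat_pow_mul_fourier hk hx
  set F : ℕ → ℂ := fun n : ℕ =>
        (1 : ℂ) / (n : ℂ) ^ k * (fourier n (x : UnitAddCircle) +
          (-1 : ℂ) ^ k * fourier (-n) (x : UnitAddCircle)) with hF
  have hF1 : F 1 = 2 * Complex.I ^ k * (Real.cos (2 * π * x - k * π / 2) : ℝ) := by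
    rw [← fourier_term]; simp [hF]
  have h2 := h.sub (hasSum_ite_eq 1 (F 1))
  have hb : HasSum (fun n : ℕ => 2 * (1 / 2 : ℝ) ^ (k - 2) * (1 / (n : ℝ) ^ 2))
      (2 * (1 / 2 : ℝ) ^ (k - 2) * (π ^ 2 / 6)) := hasSum_zeta_two.mul_left _
  have hn := h2.norm_le_of_bounded hb (fun n => by
    rcases Nat.lt_or_ge n 2 with hn | hn
    · interval_cases n
      · have : k ≠ 0 := by omega
        simp [hF, this]
      · simp only [if_true, sub_self, norm_zero]; positivity
    · rw [if_neg (by omega), sub_zero]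
      simp only [hF]
      rw [norm_mul, mul_comm]
      have h1 : ‖(fourier (n : ℤ) (x : UnitAddCircle) +
          (-1 : ℂ) ^ k * fourier (-n : ℤ) (x : UnitAddCircle))‖ ≤ 2 := by
        refine (norm_add_le _ _).trans ?_
        rw [norm_mul, norm_pow, norm_neg, norm_one, one_pow, one_mul]
        simp only [fourier_apply, Circle.norm_coe]
        norm_num
      have h2 : ‖(1 : ℂ) / (n : ℂ) ^ k‖ ≤ (1 / 2 : ℝ) ^ (k - 2) * (1 / (n : ℝ) ^ 2) := by
        obtain ⟨m, rfl⟩ := Nat.exists_eq_add_of_le hk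
        rw [norm_div, norm_one, norm_pow, Complex.norm_natCast, Nat.add_sub_cancel_left,
          one_div_pow, one_div_mul_one_div, pow_add, mul_comm ((n : ℝ) ^ 2)]
        have : (2 : ℝ) ≤ n := by exact_mod_cast hn
        gcongr
      rw [mul_assoc]
      exact mul_le_mul h1 h2 (norm_nonneg _) (by norm_num))
  have e : -(2 * π * Complex.I) ^ k / (k.factorial : ℂ) * (bernoulliFun k x : ℂ) - F 1
      = 2 * Complex.I ^ k * ((gB k x - Real.cos (2 * π * x - k * π / 2) : ℝ) : ℂ) := by
    rw [hF1, gB]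
    have : (k.factorial : ℂ) ≠ 0 := by exact_mod_cast k.factorial_ne_zero
    push_cast
    rw [mul_pow (2 * (π : ℂ)) Complex.I]
    field_simp
    try ring
  rw [e, norm_mul, norm_mul, norm_pow, Complex.norm_I, one_pow, Complex.norm_real,
    Real.norm_eq_abs, Complex.norm_ofNat] at hn
  linarith

lemma bern_succ (k : ℕ) (x : ℝ) :
    bernoulliFun k (x + 1) = bernoulliFun k x + k * x ^ (k - 1) := by
  have h := congrArg (fun p => Polynomial.aeval x p) (Polynomial.bernoulli_comp_one_add_X k)
  simp only [Polynomial.aeval_comp, map_add, map_one, Polynomial.aeval_X, nsmul_eq_mul, map_mul, map_natCast,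
    map_pow] at h
  simp only [bernoulliFun, Polynomial.eval_map_algebraMap]
  rw [add_comm x 1, h]

lemma bern_add (k : ℕ) (y : ℝ) (hy0 : 0 ≤ y) (hy1 : y ≤ 1) (M : ℝ) (m : ℕ) (hm : (m : ℝ) ≤ M) :
    |bernoulliFun k (y + m) - bernoulliFun k y| ≤ m * (k * M ^ (k - 1)) := by
  induction m with
  | zero => simp
  | succ m ih =>
    push_cast at hm ⊢
    have ih := ih (by linarith)
    rw [← add_assoc, bern_succ]
    have h1 : |(k : ℝ) * (y + m) ^ (k - 1)| ≤ k * M ^ (k - 1) := by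
      rw [abs_of_nonneg (by positivity)]
      gcongr
      linarith
    have := abs_add_le (bernoulliFun k (y + m) - bernoulliFun k y) (k * (y + m) ^ (k - 1))
    rw [show bernoulliFun k (y + m) + k * (y + m) ^ (k - 1) - bernoulliFun k y =
      bernoulliFun k (y + m) - bernoulliFun k y + k * (y + m) ^ (k - 1) by ring]
    linarith

lemma bern_sub (k : ℕ) (y : ℝ) (hy0 : 0 ≤ y) (hy1 : y ≤ 1) (M : ℝ) (m : ℕ) (hm : (m : ℝ) ≤ M) :
    |bernoulliFun k (y - m) - bernoulliFun k y| ≤ m * (k * M ^ (k - 1)) := by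
  induction m with
  | zero => simp
  | succ m ih =>
    push_cast at hm ⊢
    have ih := ih (by linarith)
    have e := bern_succ k (y - (m + 1))
    rw [show y - ((m : ℝ) + 1) + 1 = y - m by ring] at e
    have hm0 : (0 : ℝ) ≤ m := by positivity
    have h1 : |(k : ℝ) * (y - (m + 1)) ^ (k - 1)| ≤ k * M ^ (k - 1) := by
      rw [abs_mul, abs_pow, Nat.abs_cast]
      gcongr
      rw [abs_le]; constructor <;> linarith
    have := abs_sub (bernoulliFun k (y - m) - bernoulliFun k y) (k * (y - (m + 1)) ^ (k - 1))
    rw [show bernoulliFun k (y - (m + 1)) - bernoulliFun k y =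
      bernoulliFun k (y - m) - bernoulliFun k y - k * (y - (m + 1)) ^ (k - 1) by rw [e]; ring]
    linarith

lemma bern_fract (k : ℕ) (hk : 1 ≤ k) (x M : ℝ) (hM : |x| + 1 ≤ M) :
    |bernoulliFun k x - bernoulliFun k (Int.fract x)| ≤ k * M ^ k := by
  have h0 := Int.fract_nonneg x
  have h1 := Int.fract_lt_one x
  have hx := Int.fract_add_floor x
  have key : ∀ m : ℕ, (m : ℝ) ≤ M → (m : ℝ) * (k * M ^ (k - 1)) ≤ k * M ^ k := by
    intro m hm
    have hM0 : 0 ≤ M := le_trans (by positivity) hM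
    calc (m : ℝ) * (k * M ^ (k - 1)) ≤ M * (k * M ^ (k - 1)) := by gcongr
      _ = k * (M ^ (k - 1) * M) := by ring
      _ = k * M ^ k := by rw [← pow_succ, Nat.sub_add_cancel hk]
  have a1 := le_abs_self x
  have a2 := neg_abs_le x
  obtain ⟨m, hm | hm⟩ := Int.eq_nat_or_neg ⌊x⌋
  · rw [hm] at hx
    push_cast at hx
    have hmM : (m : ℝ) ≤ M := by linarith
    have := bern_add k _ h0 h1.le M m hmM
    rw [hx] at this
    exact this.trans (key m hmM)
  · rw [hm] at hx
    push_cast at hx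
    have hmM : (m : ℝ) ≤ M := by linarith
    have := bern_sub k _ h0 h1.le M m hmM
    rw [sub_eq_add_neg (Int.fract x), hx] at this
    exact this.trans (key m hmM)

lemma gB_bound (k : ℕ) (hk : 2 ≤ k) (x r : ℝ) (hr : 0 ≤ r) (hx : |x| + 1 ≤ r * k) :
    |gB k x - Real.cos (2 * π * x - k * π / 2)| ≤
      k * (2 * π * r * Real.exp 1) ^ k + (1 / 2) ^ (k - 2) * (π ^ 2 / 6) := by
  have h1 := gB_unit k hk (Int.fract x) ⟨Int.fract_nonneg x, (Int.fract_lt_one x).le⟩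
  have hc : Real.cos (2 * π * Int.fract x - k * π / 2) = Real.cos (2 * π * x - k * π / 2) := by
    rw [← Real.cos_sub_int_mul_two_pi (2 * π * x - k * π / 2) ⌊x⌋]
    congr 1
    have hx := Int.fract_add_floor x
    rw [← Int.self_sub_floor]; ring
  rw [hc] at h1
  have h2 : |gB k x - gB k (Int.fract x)| ≤ k * (2 * π * r * Real.exp 1) ^ k := by
    rw [gB, gB, ← mul_sub, abs_mul, abs_neg, abs_of_nonneg (by positivity)]
    have h3 := bern_fract k (by omega) x _ hx
    have h4 := Real.pow_div_factorial_le_exp (x := (k : ℝ)) (by positivity) k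
    have h5 : Real.exp (k : ℝ) = Real.exp 1 ^ k := by rw [← Real.exp_nat_mul, mul_one]
    calc (2 * π) ^ k / (2 * (k.factorial : ℝ)) * |bernoulliFun k x - bernoulliFun k (Int.fract x)|
        ≤ (2 * π) ^ k / (2 * (k.factorial : ℝ)) * (k * (r * k) ^ k) := by gcongr
      _ = k * (2 * π * r) ^ k * ((k : ℝ) ^ k / k.factorial) / 2 := by
          rw [mul_pow r, mul_pow (2 * π) r]
          have : (k.factorial : ℝ) ≠ 0 := by positivity
          field_simp
      _ ≤ k * (2 * π * r) ^ k * (Real.exp 1 ^ k) / 2 := by rw [← h5]; gcongr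
      _ ≤ k * (2 * π * r) ^ k * (Real.exp 1 ^ k) := half_le_self (by positivity)
      _ = _ := by rw [mul_pow _ (Real.exp 1), mul_assoc]
  have := abs_add_le (gB k x - gB k (Int.fract x))
    (gB k (Int.fract x) - Real.cos (2 * π * x - k * π / 2))
  rw [sub_add_sub_cancel] at this
  linarith

lemma gB_eventually (ρ : ℝ) (h0 : 0 ≤ ρ) (h : ρ < 1 / (2 * π * Real.exp 1)) :
    ∀ᶠ k : ℕ in atTop, ∀ x : ℝ, |x| ≤ ρ * (k + 1) →
      |gB k x - Real.cos (2 * π * x - k * π / 2)| < 1 / 2 := by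
  obtain ⟨r, hr1, hr2⟩ := exists_between h
  have hr0 : 0 ≤ r := h0.trans hr1.le
  have hq : 2 * π * r * Real.exp 1 < 1 := by
    rw [lt_div_iff₀ (by positivity)] at hr2
    linarith
  have t1 := tendsto_self_mul_const_pow_of_lt_one (r := 2 * π * r * Real.exp 1)
    (by positivity) hq
  have t2 : Tendsto (fun k : ℕ => (1 / 2 : ℝ) ^ (k - 2) * (π ^ 2 / 6)) atTop (nhds 0) := by
    have := ((tendsto_pow_atTop_nhds_zero_of_lt_one (r := (1 / 2 : ℝ)) (by norm_num)
      (by norm_num)).comp (tendsto_sub_atTop_nat 2)).mul_const (π ^ 2 / 6)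
    simpa using this
  have t3 := t1.add t2
  rw [add_zero] at t3
  have t4 : ∀ᶠ k : ℕ in atTop, (ρ + 1) / (r - ρ) ≤ k :=
    tendsto_natCast_atTop_atTop.eventually_ge_atTop _
  filter_upwards [t3.eventually_lt_const (show (0 : ℝ) < 1 / 2 by norm_num), t4,
    eventually_ge_atTop 2] with k h1 h2 h3 x hx
  refine (gB_bound k h3 x r hr0 ?_).trans_lt h1
  rw [div_le_iff₀ (by linarith)] at h2
  linarith

lemma card_bounds (n : ℕ) (ρ α β : ℝ) (hαβ : α ≤ β)
    (hα : |α| ≤ ρ) (hβ : |β| ≤ ρ)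
    (h1 : ∀ x : ℝ, |x| ≤ ρ → |gB (n + 1) x - Real.cos (2 * π * x - (n + 1 : ℕ) * π / 2)| < 1 / 2)
    (h2 : ∀ x : ℝ, |x| ≤ ρ → |gB n x - Real.cos (2 * π * x - n * π / 2)| < 1 / 2) :
    |(Nat.card {x : ℝ | BernoulliR (n + 1) x = 0 ∧ α ≤ x ∧ x ≤ β} : ℝ) - 2 * (β - α)| ≤ 3 := by
  set S := {x : ℝ | BernoulliR (n + 1) x = 0 ∧ α ≤ x ∧ x ≤ β} with hS
  have habs : ∀ x, α ≤ x → x ≤ β → |x| ≤ ρ := by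
    intro x ha hb
    rw [abs_le] at *
    constructor <;> linarith
  let u : ℝ → ℝ := fun x => 2 * (x - (n + 1) / 4)
  have hu : ∀ x, 2 * π * x - (n + 1 : ℕ) * π / 2 = π * u x := by
    intro x; simp only [u]; push_cast; ring
  have hu' : ∀ x, 2 * π * x - n * π / 2 = π * u x + π / 2 := by
    intro x; simp only [u]; ring
  simp only [hu] at h1
  simp only [hu', Real.cos_add_pi_div_two] at h2
  have hmul : ∀ (j : ℤ) (t : ℝ), Real.cos (π * t) = (-1) ^ j * Real.cos (π * (t - j)) := by
    intro j t
    rw [← Real.cos_add_int_mul_pi]; congr 1; ring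
  have hsq : ∀ j : ℤ, |(-1 : ℝ) ^ j| = 1 := by
    intro j; rw [abs_zpow, abs_neg, abs_one, one_zpow]
  have hcont : Continuous (gB (n + 1)) :=
    continuous_iff_continuousAt.2 fun x => (gB_hasDerivAt n x).continuousAt
  have hinj : Set.InjOn (fun x => ⌊u x⌋) S := by
    have main : ∀ x ∈ S, ∀ y ∈ S, ⌊u x⌋ = ⌊u y⌋ → ¬ x < y := by
      intro x hx y hy hxy hlt
      obtain ⟨hx0, hxa, hxb⟩ := hx
      obtain ⟨hy0, hya, hyb⟩ := hy
      rw [gB_zero_iff] at hx0 hy0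
      obtain ⟨c, ⟨hc1, hc2⟩, hc⟩ := exists_hasDerivAt_eq_zero hlt hcont.continuousOn
        (hx0.trans hy0.symm) (fun z _ => gB_hasDerivAt n z)
      have hc0 : gB n c = 0 := by
        have : (2 * π) ≠ 0 := by positivity
        exact (mul_eq_zero.1 hc).resolve_left this
      have e1 := h1 x (habs x hxa hxb)
      have e2 := h1 y (habs y hya hyb)
      have e3 := h2 c (habs c (by linarith) (by linarith))
      set j := ⌊u x⌋ with hj
      have f1 := Int.floor_le (u x)
      have f2 := Int.lt_floor_add_one (u y)
      rw [← hxy] at f2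
      rw [← hj] at f1
      have ux : u x < u c := by simp only [u]; linarith
      have uy : u c < u y := by simp only [u]; linarith
      rw [hx0, zero_sub, abs_neg, hmul j, abs_mul, hsq, one_mul, abs_lt] at e1
      rw [hy0, zero_sub, abs_neg, hmul j, abs_mul, hsq, one_mul, abs_lt] at e2
      rw [hc0, zero_sub, neg_neg, abs_lt] at e3
      have hp := Real.pi_pos
      have g1 : Real.cos (π * (u c - j)) < Real.cos (π * (u x - j)) := by
        apply Real.cos_lt_cos_of_nonneg_of_le_pi
        · apply mul_nonneg hp.le; linarith
        · nlinarith
        · gcongr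
      have g2 : Real.cos (π * (u y - j)) < Real.cos (π * (u c - j)) := by
        apply Real.cos_lt_cos_of_nonneg_of_le_pi
        · apply mul_nonneg hp.le; linarith
        · nlinarith
        · gcongr
      have g3 : |Real.cos (π * u c)| < 1 / 2 := by
        rw [hmul j, abs_mul, hsq, one_mul, abs_lt]
        constructor <;> linarith
      rw [abs_lt] at g3
      have := Real.sin_sq_add_cos_sq (π * u c)
      nlinarith
    intro x hx y hy hxy
    rcases lt_trichotomy x y with h | h | h
    · exact absurd h (main x hx y hy hxy)
    · exact h
    · exact absurd h (main y hy x hx hxy.symm)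
  have hmaps : ∀ x ∈ S, ⌊u x⌋ ∈ Set.Icc ⌊u α⌋ ⌊u β⌋ := by
    rintro x ⟨-, hxa, hxb⟩
    constructor <;> apply Int.floor_le_floor <;> simp only [u] <;> linarith
  have hfin : S.Finite := Set.Finite.of_injOn (f := fun x => ⌊u x⌋) hmaps hinj (Set.finite_Icc _ _)
  have up := Set.ncard_le_ncard_of_injOn (fun x => ⌊u x⌋) hmaps hinj (Set.finite_Icc _ _)
  have hsub : Set.Ico ⌈u α⌉ ⌊u β⌋ ⊆ (fun x => ⌊u x⌋) '' S := by
    rintro j ⟨hj1, hj2⟩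
    have hj1 : u α ≤ j := Int.ceil_le.1 hj1
    have hj2 : (j : ℝ) + 1 ≤ u β := by
      have := Int.le_floor.1 (Int.add_one_le_of_lt hj2)
      exact_mod_cast this
    let p : ℝ → ℝ := fun t => t / 2 + (n + 1) / 4
    have hup : ∀ t, u (p t) = t := by intro t; simp only [u, p]; ring
    have k1 : α ≤ p j := by simp only [u, p] at *; linarith
    have k2 : p (j + 1) ≤ β := by simp only [u, p] at *; linarith
    have k3 : p j ≤ p (j + 1) := by simp only [p]; linarith
    have e1 := h1 (p j) (habs _ k1 (by linarith))
    have e2 := h1 (p (j + 1)) (habs _ (by linarith) k2)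
    rw [hup, hmul j, sub_self, mul_zero, Real.cos_zero, mul_one] at e1
    rw [hup, hmul j, add_sub_cancel_left, mul_one, Real.cos_pi] at e2
    have hc : ContinuousOn (fun x => (-1 : ℝ) ^ j * gB (n + 1) x) (Set.Icc (p j) (p (j + 1))) :=
      (continuous_const.mul hcont).continuousOn
    have hz : (0 : ℝ) ∈ Set.Ioo ((-1 : ℝ) ^ j * gB (n + 1) (p (j + 1)))
        ((-1 : ℝ) ^ j * gB (n + 1) (p j)) := by
      rw [abs_lt] at e1 e2
      rcases Int.even_or_odd j with hj | hj
      · rw [hj.neg_one_zpow] at *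
        constructor <;> linarith
      · rw [hj.neg_one_zpow] at *
        constructor <;> linarith
    obtain ⟨c, ⟨hc1, hc2⟩, hc0⟩ := intermediate_value_Ioo' k3 hc hz
    refine ⟨c, ⟨?_, by linarith, by linarith⟩, ?_⟩
    · rw [gB_zero_iff]
      exact (mul_eq_zero.1 hc0).resolve_left (by
        intro h; have := hsq j; rw [h] at this; simp at this)
    · simp only [p] at hc1 hc2
      simp only [Int.floor_eq_iff, u]
      constructor <;> linarith
  have lo := (Set.ncard_le_ncard hsub (hfin.image _)).trans (Set.ncard_image_le hfin)
  rw [← Finset.coe_Ico, Set.ncard_coe_finset, Int.card_Ico] at lo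
  rw [← Finset.coe_Icc, Set.ncard_coe_finset, Int.card_Icc] at up
  have hcard : Nat.card S = S.ncard := rfl
  rw [hcard]
  have hmono : ⌊u α⌋ ≤ ⌊u β⌋ := by
    apply Int.floor_le_floor; simp only [u]; linarith
  have up' : (S.ncard : ℤ) ≤ ⌊u β⌋ + 1 - ⌊u α⌋ := by omega
  have lo' : ⌊u β⌋ - ⌈u α⌉ ≤ (S.ncard : ℤ) := by omega
  have up'' : (S.ncard : ℝ) ≤ ⌊u β⌋ + 1 - ⌊u α⌋ := by exact_mod_cast up'
  have lo'' : (⌊u β⌋ : ℝ) - ⌈u α⌉ ≤ (S.ncard : ℝ) := by exact_mod_cast lo'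
  have i1 := Int.floor_le (u β)
  have i2 := Int.lt_floor_add_one (u β)
  have i3 := Int.lt_floor_add_one (u α)
  have i4 := Int.ceil_lt_add_one (u α)
  simp only [u] at *
  rw [abs_le]
  constructor <;> linarith

/-- The rescaled real zeros of the Bernoulli polynomials are asymptotically uniformly
distributed on `[-1/(2πe), 1/(2πe)]`: if `[a, b] ⊆ (-1/(2πe), 1/(2πe))`, then the number
of real zeros of `Bₙ` in `[na, nb]`, divided by `n`, tends to `2(b - a)`. -/
theorem bernoulli_real_roots_equidistributed
    (a b : ℝ) (hab : a < b)
    (ha : -(1 / (2 * π * Real.exp 1)) < a) (hb : b < 1 / (2 * π * Real.exp 1)) :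
    Tendsto
      (fun n : ℕ =>
        (Nat.card {x : ℝ | BernoulliR n x = 0 ∧ (n : ℝ) * a ≤ x ∧ x ≤ (n : ℝ) * b} : ℝ) /
          (n : ℝ))
      atTop (nhds (2 * (b - a))) := by
  have hρ : max |a| |b| < 1 / (2 * π * Real.exp 1) := by
    rw [max_lt_iff, abs_lt, abs_lt]
    refine ⟨⟨ha, ?_⟩, ?_, hb⟩ <;> linarith
  have hρ0 : 0 ≤ max |a| |b| := (abs_nonneg a).trans (le_max_left _ _)
  have hev := gB_eventually _ hρ0 hρ
  rw [← tendsto_add_atTop_iff_nat 1, tendsto_iff_norm_sub_tendsto_zero]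
  have ht : Tendsto (fun n : ℕ => (3 : ℝ) / ((n + 1 : ℕ) : ℝ)) atTop (nhds 0) :=
    (tendsto_const_div_atTop_nhds_zero_nat 3).comp (tendsto_add_atTop_nat 1)
  refine squeeze_zero' (Eventually.of_forall fun n => norm_nonneg _) ?_ ht
  filter_upwards [hev, (tendsto_add_atTop_nat 1).eventually hev] with n h2 h1
  have hn : (0 : ℝ) < ((n + 1 : ℕ) : ℝ) := by positivity
  have hcast : ((n + 1 : ℕ) : ℝ) = n + 1 := by push_cast; rfl
  have h := card_bounds n (max |a| |b| * (n + 1)) (((n + 1 : ℕ) : ℝ) * a) (((n + 1 : ℕ) : ℝ) * b)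
    (by gcongr)
    (by rw [abs_mul, Nat.abs_cast, hcast, mul_comm]; gcongr; exact le_max_left _ _)
    (by rw [abs_mul, Nat.abs_cast, hcast, mul_comm]; gcongr; exact le_max_right _ _)
    (fun x hx => h1 x (hx.trans (by rw [hcast]; nlinarith)))
    h2
  rw [Real.norm_eq_abs, le_div_iff₀ hn]
  refine le_trans (le_of_eq ?_) h
  rw [← abs_of_pos hn, ← abs_mul, abs_of_pos hn]
  congr 1
  field_simp
end
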